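/- The set consisting of the zero polynomial together with all homogeneous polynomials f ∈ ℂ[X₀, …, Xₙ] of degree d − n − 1 satisfying f ∈ I_v^{ord_P(v)} for every v in the point residual R₀(P) is a ℂ-linear subspace of the polynomial ring of dimension exactly 1. (This is the adjoint-interpolation content of the paper's main Theorem 1: the adjoint polynomial of an arbitrary convex polytope is, up to scaling, the unique polynomial of degree d − n − 1 vanishing to the prescribed orders at the finitely many points of the point residual.) -/

import Mathlib

open MvPolynomial Finset Classical

noncomputable section

/-- The homogenization embedding `y ↦ (1, y₁, …, yₙ)`. -/
def lift1 {n : ℕ} (y : Fin n → ℝ) : Fin (n + 1) → ℝ := Fin.cons 1 y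

/-- The polytope `P = {y ∈ ℝⁿ | ℓᵢ(1,y) ≥ 0 for all i}`. -/
def polytopeOf {n d : ℕ} (ℓ : Fin d → MvPolynomial (Fin (n + 1)) ℝ) : Set (Fin n → ℝ) :=
  {y | ∀ i, 0 ≤ eval (lift1 y) (ℓ i)}

/-- The facet `Fᵢ = {y ∈ P | ℓᵢ(1,y) = 0}`. -/
def facetOf {n d : ℕ} (ℓ : Fin d → MvPolynomial (Fin (n + 1)) ℝ) (i : Fin d) :
    Set (Fin n → ℝ) :=
  {y ∈ polytopeOf ℓ | eval (lift1 y) (ℓ i) = 0}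

/-- The flat `F_v = {i | ℓᵢ(v) = 0}` of all facet hyperplanes through `v`. -/
def flatOf {n d : ℕ} (ℓ : Fin d → MvPolynomial (Fin (n + 1)) ℝ) (v : Fin (n + 1) → ℝ) :
    Finset (Fin d) :=
  Finset.univ.filter fun i => eval v (ℓ i) = 0

/-- The rank `r_v`: the dimension of the linear span of `{ℓᵢ : i ∈ F_v}`. -/
def rkOf {n d : ℕ} (ℓ : Fin d → MvPolynomial (Fin (n + 1)) ℝ) (v : Fin (n + 1) → ℝ) : ℕ :=
  Module.finrank ℝ (Submodule.span ℝ (ℓ '' (flatOf ℓ v : Set (Fin d))))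

/-- The nullity `nl_v = |F_v| − r_v`. -/
def nlOf {n d : ℕ} (ℓ : Fin d → MvPolynomial (Fin (n + 1)) ℝ) (v : Fin (n + 1) → ℝ) : ℕ :=
  (flatOf ℓ v).card - rkOf ℓ v

/-- The set `P_v = {y ∈ P | ℓᵢ(1,y) = 0 for all i ∈ F_v}`. -/
def faceOf {n d : ℕ} (ℓ : Fin d → MvPolynomial (Fin (n + 1)) ℝ) (v : Fin (n + 1) → ℝ) :
    Set (Fin n → ℝ) :=
  {y ∈ polytopeOf ℓ | ∀ i ∈ flatOf ℓ v, eval (lift1 y) (ℓ i) = 0}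

/-- The order `ord_P(L_v)`: equal to `nl_v` if `P_v` is nonempty with affine span of
dimension `n − r_v`, and to `nl_v + 1` otherwise. -/
def ordOf {n d : ℕ} (ℓ : Fin d → MvPolynomial (Fin (n + 1)) ℝ) (v : Fin (n + 1) → ℝ) : ℕ :=
  if (faceOf ℓ v).Nonempty ∧
      Module.finrank ℝ (affineSpan ℝ (faceOf ℓ v)).direction = n - rkOf ℓ v
  then nlOf ℓ v
  else nlOf ℓ v + 1

/-- The ideal `I_v ⊆ ℂ[X₀,…,Xₙ]` generated by all homogeneous degree-1 polynomials
vanishing at the real point `v`. -/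
def pointIdealC {n : ℕ} (v : Fin (n + 1) → ℝ) : Ideal (MvPolynomial (Fin (n + 1)) ℂ) :=
  Ideal.span {p | p.IsHomogeneous 1 ∧ eval (fun i => (v i : ℂ)) p = 0}

/-- The ideal `I_v ⊆ ℝ[X₀,…,Xₙ]` generated by all homogeneous degree-1 polynomials
vanishing at `v`. -/
def pointIdealR {n : ℕ} (v : Fin (n + 1) → ℝ) : Ideal (MvPolynomial (Fin (n + 1)) ℝ) :=
  Ideal.span {p | p.IsHomogeneous 1 ∧ eval v p = 0}

/-- Complexification of a real polynomial. -/
def toC {n : ℕ} (p : MvPolynomial (Fin (n + 1)) ℝ) : MvPolynomial (Fin (n + 1)) ℂ :=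
  map (algebraMap ℝ ℂ) p

/-- The hypotheses on the facet equations `ℓ₁, …, ℓ_d` of a full-dimensional compact convex
polytope `P ⊆ ℝⁿ`: the `ℓᵢ` are pairwise non-proportional homogeneous degree-1 polynomials,
`P` is compact with affine span all of `ℝⁿ`, and each facet `Fᵢ` is nonempty with affine
span of dimension `n − 1`. -/
structure IsPolytopeSetup {n d : ℕ} (ℓ : Fin d → MvPolynomial (Fin (n + 1)) ℝ) : Prop where
  hn : 1 ≤ n
  hd : n + 1 ≤ d
  hhom : ∀ i, (ℓ i).IsHomogeneous 1
  hne : ∀ i, ℓ i ≠ 0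
  hprop : ∀ i j, i ≠ j → ∀ c : ℝ, c • ℓ i ≠ ℓ j
  hcpt : IsCompact (polytopeOf ℓ)
  hfull : affineSpan ℝ (polytopeOf ℓ) = ⊤
  hfacet_ne : ∀ i, (facetOf ℓ i).Nonempty
  hfacet : ∀ i, Module.finrank ℝ (affineSpan ℝ (facetOf ℓ i)).direction = n - 1

/-!
Work with the cone `C` over `P` and its arrangement of `d` hyperplanes in `ℝ^{n+1}`. The order
prescribed at a point `v` is `d - n` (if `v` is a vertex) or `d - n + 1`, minus the number
of hyperplanes missing `v`, so it does not change under restriction to a hyperplane of the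
arrangement, and dividing by the equation of a hyperplane corresponds to deleting that hyperplane.

Uniqueness is an induction on the number of hyperplanes. If `C` is replaced by a proper convex
subset of the cone of the arrangement, or if this cone is not full-dimensional, or if there
are fewer than `e + n + 1` hyperplanes for the degree `e`, then only the zero form satisfies
the conditions: one of these defects is inherited by some hyperplane of the arrangement, so
a solution vanishes there and can be divided by its equation. It follows that restriction to
an irredundant hyperplane is injective on solutions, while all solutions are divisible by the
equation of a redundant one.

For existence, Warren's adjoint is the sum, over the simplices of a triangulation of the dual
cone, of the volume of the simplex times the product of the equations of the facets that are not
vertices of the simplex. Each summand vanishes at least to the order required at a vertex. If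
`v` is not a vertex, the summands that miss the required order by one belong to the simplices
with a facet in the hyperplane dual to `v`. That hyperplane meets the interior of the dual cone,
so these simplices occur in pairs sharing such a facet, and the sum of a pair gains one order. A
regular triangulation with generic heights makes this pairing explicit: its simplices are the
vertices of a simple polyhedron, and the pairs are the edges of the polyhedron in direction `v`.
-/

section Polynomials

variable {𝕜 K : Type*} [Field 𝕜] [Field K] {σ : Type*}

/-- The expansion `f ↦ f(w + T X)` of a polynomial along the lines through the point `w`. Its order
in `T` is the vanishing order of `f` at `w`. -/
def lineExpansion (w : σ → K) : MvPolynomial σ K →ₐ[K] Polynomial (MvPolynomial σ K) :=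
  aeval fun j => Polynomial.C (C (w j)) + Polynomial.X * Polynomial.C (X j)

theorem lineExpansion_X (w : σ → K) (j : σ) :
    lineExpansion w (X j) = Polynomial.C (C (w j)) + Polynomial.X * Polynomial.C (X j) :=
  aeval_X _ j

theorem lineExpansion_of_isHomogeneous_one (w : σ → K) {p : MvPolynomial σ K}
    (hp : p.IsHomogeneous 1) :
    lineExpansion w p = Polynomial.C (C (eval w p)) + Polynomial.X * Polynomial.C p := by
  rw [← mem_homogeneousSubmodule, homogeneousSubmodule_one_eq_span_X] at hp
  induction hp using Submodule.span_induction with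
  | mem p hp =>
    obtain ⟨j, rfl⟩ := hp
    rw [lineExpansion_X, eval_X]
  | zero => simp
  | add p q _ _ hp hq =>
    simp only [map_add, hp, hq]
    ring
  | smul c p _ hp =>
    rw [map_smul, hp, Algebra.smul_def, IsScalarTower.algebraMap_apply K (MvPolynomial σ K),
      algebraMap_eq, Polynomial.algebraMap_eq, smul_eq_C_mul]
    simp only [map_mul, eval_C]
    ring

theorem eval_zero_lineExpansion (w : σ → K) (f : MvPolynomial σ K) :
    (lineExpansion w f).eval 0 = C (eval w f) := by
  have hcomp : ((Polynomial.aeval (0 : MvPolynomial σ K)).restrictScalars K).comp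
      (lineExpansion w) = (Algebra.ofId K _).comp (aeval w) := by
    refine algHom_ext fun j => ?_
    simp [lineExpansion_X, Algebra.ofId_apply, algebraMap_eq]
  exact DFunLike.congr_fun hcomp f

theorem lineExpansion_injective (w : σ → K) : Function.Injective (lineExpansion w) := by
  let shiftBack : Polynomial (MvPolynomial σ K) →ₐ[K] MvPolynomial σ K :=
    (aeval fun j => X j - C (w j)).comp
      ((Polynomial.aeval (1 : MvPolynomial σ K)).restrictScalars K)
  have hcomp : shiftBack.comp (lineExpansion w) = AlgHom.id K _ := by
    refine algHom_ext fun j => ?_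
    simp [shiftBack, lineExpansion_X]
  exact Function.LeftInverse.injective (g := shiftBack) (DFunLike.congr_fun hcomp)

theorem natDegree_lineExpansion_le (w : σ → K) {e : ℕ} {f : MvPolynomial σ K}
    (hf : f.IsHomogeneous e) : (lineExpansion w f).natDegree ≤ e := by
  have hdeg : (map (algebraMap K (MvPolynomial σ K)) f).totalDegree ≤ e :=
    (hf.map _).totalDegree_le
  rw [lineExpansion, ← aeval_map_algebraMap (MvPolynomial σ K)]
  refine (aeval_natDegree_le _ hdeg _ (n := 1) fun j => ?_).trans_eq (mul_one e)
  compute_degree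

/-- The ideal of polynomials vanishing to order at least `s` at the point `w`. -/
def orderIdeal (w : σ → K) (s : ℕ) : Ideal (MvPolynomial σ K) :=
  (Ideal.span {Polynomial.X ^ s}).comap (lineExpansion w)

theorem mem_orderIdeal {w : σ → K} {s : ℕ} {f : MvPolynomial σ K} :
    f ∈ orderIdeal w s ↔ Polynomial.X ^ s ∣ lineExpansion w f := by
  rw [orderIdeal, Ideal.mem_comap, Ideal.mem_span_singleton]

theorem orderIdeal_antitone (w : σ → K) : Antitone (orderIdeal w) := fun _ _ hst _ hf =>
  mem_orderIdeal.2 ((pow_dvd_pow _ hst).trans (mem_orderIdeal.1 hf))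

theorem eval_eq_zero_of_mem_orderIdeal {w : σ → K} {s : ℕ} (hs : 1 ≤ s) {f : MvPolynomial σ K}
    (hf : f ∈ orderIdeal w s) : eval w f = 0 := by
  have hX : Polynomial.X ∣ lineExpansion w f := by
    simpa using mem_orderIdeal.1 (orderIdeal_antitone w hs hf)
  rw [Polynomial.X_dvd_iff, Polynomial.coeff_zero_eq_eval_zero, eval_zero_lineExpansion] at hX
  simpa using hX

theorem eq_zero_of_mem_orderIdeal_of_lt {w : σ → K} {e s : ℕ} {f : MvPolynomial σ K}
    (hf : f.IsHomogeneous e) (hes : e < s) (hw : f ∈ orderIdeal w s) : f = 0 := by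
  refine (map_eq_zero_iff _ (lineExpansion_injective w)).1 ?_
  refine Polynomial.eq_zero_of_dvd_of_natDegree_lt (mem_orderIdeal.1 hw) ?_
  rw [Polynomial.natDegree_X_pow]
  exact (natDegree_lineExpansion_le w hf).trans_lt hes

/-- The ideal generated by the degree-one forms vanishing at `w`. -/
def pointIdeal (w : σ → K) : Ideal (MvPolynomial σ K) :=
  Ideal.span {p | p.IsHomogeneous 1 ∧ eval w p = 0}

theorem pointIdeal_pow_le_orderIdeal (w : σ → K) (s : ℕ) :
    pointIdeal w ^ s ≤ orderIdeal w s := by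
  have hbase : pointIdeal w ≤ (Ideal.span {Polynomial.X}).comap (lineExpansion w) := by
    refine Ideal.span_le.2 fun p ⟨hp, hpw⟩ => ?_
    rw [SetLike.mem_coe, Ideal.mem_comap, Ideal.mem_span_singleton,
      lineExpansion_of_isHomogeneous_one w hp, hpw, map_zero, map_zero, zero_add]
    exact dvd_mul_right _ _
  calc pointIdeal w ^ s ≤ (Ideal.span {Polynomial.X}).comap (lineExpansion w) ^ s :=
        Ideal.pow_right_mono hbase s
    _ ≤ (Ideal.span {Polynomial.X} ^ s).comap (lineExpansion w) := Ideal.le_comap_pow _ s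
    _ = orderIdeal w s := by rw [Ideal.span_singleton_pow, orderIdeal]

attribute [local instance] MvPolynomial.gradedAlgebra

theorem isHomogeneous_of_mul_left {e : ℕ} {p g : MvPolynomial σ K} (hp : p.IsHomogeneous 1)
    (hp0 : p ≠ 0) (hpg : (p * g).IsHomogeneous (e + 1)) : g.IsHomogeneous e := by
  have hcomp := DirectSum.coe_decompose_mul_of_left_mem_of_le (homogeneousSubmodule σ K)
    (b := g) ((mem_homogeneousSubmodule 1 p).2 hp) (Nat.le_add_left 1 e)
  rw [DirectSum.decompose_of_mem_same _ ((mem_homogeneousSubmodule _ _).2 hpg),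
    Nat.add_sub_cancel] at hcomp
  rw [mul_left_cancel₀ hp0 hcomp]
  exact (mem_homogeneousSubmodule _ _).1 (SetLike.coe_mem _)

theorem mul_eq_zero_of_isHomogeneous_zero {p g : MvPolynomial σ K} (hp : p.IsHomogeneous 1)
    (hpg : (p * g).IsHomogeneous 0) : p * g = 0 := by
  have hcomp := DirectSum.coe_decompose_mul_of_left_mem_of_not_le (homogeneousSubmodule σ K)
    (b := g) ((mem_homogeneousSubmodule 1 p).2 hp) (Nat.not_succ_le_zero 0)
  rwa [DirectSum.decompose_of_mem_same _ ((mem_homogeneousSubmodule _ _).2 hpg)] at hcomp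

theorem mem_orderIdeal_of_mul_of_eval_ne_zero {w : σ → K} {s : ℕ} {p g : MvPolynomial σ K}
    (hp : p.IsHomogeneous 1) (hpw : eval w p ≠ 0) (hpg : p * g ∈ orderIdeal w s) :
    g ∈ orderIdeal w s := by
  rw [mem_orderIdeal, map_mul] at hpg
  refine mem_orderIdeal.2 (Polynomial.prime_X.pow_dvd_of_dvd_mul_left s ?_ hpg)
  rw [Polynomial.X_dvd_iff, lineExpansion_of_isHomogeneous_one w hp]
  simpa using hpw

theorem mem_orderIdeal_of_mul_of_eval_eq_zero {w : σ → K} {s : ℕ} {p g : MvPolynomial σ K}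
    (hp : p.IsHomogeneous 1) (hp0 : p ≠ 0) (hpw : eval w p = 0)
    (hpg : p * g ∈ orderIdeal w (s + 1)) : g ∈ orderIdeal w s := by
  rw [mem_orderIdeal, map_mul, lineExpansion_of_isHomogeneous_one w hp, hpw, map_zero, map_zero,
    zero_add, pow_succ', mul_assoc, mul_dvd_mul_iff_left Polynomial.X_ne_zero] at hpg
  refine mem_orderIdeal.2 (Polynomial.prime_X.pow_dvd_of_dvd_mul_left s ?_ hpg)
  rwa [Polynomial.X_dvd_iff, Polynomial.coeff_C_zero]

section OneVariable

variable [Unique σ]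

theorem eq_smul_X_pow_of_isHomogeneous {e : ℕ} {f : MvPolynomial σ K} (hf : f.IsHomogeneous e) :
    ∃ c : K, f = c • X default ^ e := by
  refine ⟨coeff (Finsupp.single default e) f, ?_⟩
  ext m
  have hm : m = Finsupp.single default (m default) := by
    refine Finsupp.ext fun i => ?_
    rw [Unique.eq_default i, Finsupp.single_eq_same]
  rw [coeff_smul, coeff_X_pow, smul_eq_mul, mul_ite, mul_one, mul_zero]
  split_ifs with h
  · rw [h]
  · refine hf.coeff_eq_zero fun hdeg => h ?_
    rw [hm, Finsupp.degree_single] at hdeg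
    rw [hm, hdeg]

theorem eq_zero_of_isHomogeneous_of_eval_eq_zero {e : ℕ} {f : MvPolynomial σ K}
    (hf : f.IsHomogeneous e) {w : σ → K} (hw : w ≠ 0) (hfw : eval w f = 0) : f = 0 := by
  obtain ⟨c, rfl⟩ := eq_smul_X_pow_of_isHomogeneous hf
  have hw0 : w default ≠ 0 := fun h => hw (funext fun i => by rw [Unique.eq_default i, h]; rfl)
  have hc : c = 0 := by simpa [smul_eval, hw0] using hfw
  rw [hc, zero_smul]

theorem rank_homogeneousSubmodule_le_one (e : ℕ) :
    Module.rank K (homogeneousSubmodule σ K e) ≤ 1 := by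
  refine (rank_submodule_le_one_iff' _).2 ⟨X default ^ e, fun f hf => ?_⟩
  obtain ⟨c, rfl⟩ := eq_smul_X_pow_of_isHomogeneous ((mem_homogeneousSubmodule _ _).1 hf)
  exact Submodule.smul_mem _ c (Submodule.mem_span_singleton_self _)

end OneVariable

section LinearForms

variable [Fintype σ]

theorem dual_apply_eq_sum (φ : Module.Dual 𝕜 (σ → 𝕜)) (v : σ → 𝕜) :
    φ v = ∑ j, φ (Pi.single j 1) * v j := by
  conv_lhs => rw [pi_eq_sum_univ' v, map_sum]
  simp only [map_smul, smul_eq_mul, mul_comm]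

variable [Algebra 𝕜 K]

variable (K) in
/-- The homogeneous polynomial of degree one over `K` attached to a functional over `𝕜`. -/
def linearForm : Module.Dual 𝕜 (σ → 𝕜) →ₗ[𝕜] MvPolynomial σ K where
  toFun φ := ∑ j, C (algebraMap 𝕜 K (φ (Pi.single j 1))) * X j
  map_add' φ ψ := by simp only [LinearMap.add_apply, map_add, add_mul, sum_add_distrib]
  map_smul' c φ := by
    rw [RingHom.id_apply, smul_sum]
    refine sum_congr rfl fun j _ => ?_
    rw [LinearMap.smul_apply, smul_eq_mul, map_mul, map_mul, mul_assoc, Algebra.smul_def,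
      MvPolynomial.algebraMap_apply]

theorem linearForm_apply (φ : Module.Dual 𝕜 (σ → 𝕜)) :
    linearForm K φ = ∑ j, C (algebraMap 𝕜 K (φ (Pi.single j 1))) * X j :=
  rfl

theorem linearForm_proj (j : σ) :
    linearForm K (LinearMap.proj j : Module.Dual 𝕜 (σ → 𝕜)) = X j := by
  rw [linearForm_apply, sum_eq_single_of_mem j (mem_univ j)]
  · simp
  · intro i _ hij
    simp [Pi.single_eq_of_ne' hij]

theorem isHomogeneous_linearForm (φ : Module.Dual 𝕜 (σ → 𝕜)) :
    (linearForm K φ).IsHomogeneous 1 :=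
  IsHomogeneous.sum _ _ _ fun _ _ => isHomogeneous_C_mul_X _ _

theorem eval_linearForm (φ : Module.Dual 𝕜 (σ → 𝕜)) (v : σ → 𝕜) :
    eval (algebraMap 𝕜 K ∘ v) (linearForm K φ) = algebraMap 𝕜 K (φ v) := by
  simp only [dual_apply_eq_sum φ v, linearForm_apply, map_sum, map_mul, eval_C, eval_X,
    Function.comp_apply]

theorem linearForm_injective :
    Function.Injective (linearForm K : Module.Dual 𝕜 (σ → 𝕜) →ₗ[𝕜] MvPolynomial σ K) := by
  refine (injective_iff_map_eq_zero _).2 fun φ hφ => LinearMap.ext fun v => ?_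
  have hv := eval_linearForm (K := K) φ v
  rw [hφ, map_zero] at hv
  exact (FaithfulSMul.algebraMap_injective 𝕜 K) (hv.symm.trans (map_zero _).symm)

theorem linearForm_ne_zero {φ : Module.Dual 𝕜 (σ → 𝕜)} (hφ : φ ≠ 0) : linearForm K φ ≠ 0 :=
  (map_ne_zero_iff _ linearForm_injective).2 hφ

theorem exists_linearForm_eq {p : MvPolynomial σ 𝕜} (hp : p.IsHomogeneous 1) :
    ∃ φ : Module.Dual 𝕜 (σ → 𝕜), linearForm 𝕜 φ = p := by
  rw [← mem_homogeneousSubmodule, homogeneousSubmodule_one_eq_span_X] at hp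
  have hle : Submodule.span 𝕜 (Set.range X) ≤
      LinearMap.range (linearForm 𝕜 : Module.Dual 𝕜 (σ → 𝕜) →ₗ[𝕜] MvPolynomial σ 𝕜) := by
    rw [Submodule.span_le]
    rintro _ ⟨j, rfl⟩
    exact ⟨_, linearForm_proj j⟩
  exact hle hp

end LinearForms

section Restriction

variable {τ : Type*}

theorem exists_apply_eq_sub_smul {E F : Type*} [AddCommGroup E] [Module 𝕜 E] [AddCommGroup F]
    [Module 𝕜 F] {A : F →ₗ[𝕜] E} {φ : Module.Dual 𝕜 E} (hφ : φ ≠ 0)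
    (hA : Function.Injective A) (hexact : Function.Exact A φ) :
    ∃ (B : E →ₗ[𝕜] F) (u : E), ∀ x, A (B x) = x - φ x • u := by
  obtain ⟨u, hu⟩ := LinearMap.surjective hφ 1
  obtain ⟨B, hB⟩ := A.exists_leftInverse_of_injective (LinearMap.ker_eq_bot.2 hA)
  refine ⟨B ∘ₗ (LinearMap.id - φ.smulRight u), u, fun x => ?_⟩
  obtain ⟨z, hz⟩ := (hexact (x - φ x • u)).1 (by simp [hu])
  have hBz : B (A z) = z := DFunLike.congr_fun hB z
  simp only [LinearMap.comp_apply, LinearMap.sub_apply, LinearMap.id_apply,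
    LinearMap.smulRight_apply]
  rw [← hz, hBz]

theorem exists_hyperplane_parametrization {N : ℕ} {φ : Module.Dual 𝕜 (Fin (N + 1) → 𝕜)}
    (hφ : φ ≠ 0) :
    ∃ A : (Fin N → 𝕜) →ₗ[𝕜] (Fin (N + 1) → 𝕜), Function.Injective A ∧ Function.Exact A φ := by
  have hker : Module.finrank 𝕜 (Fin N → 𝕜) = Module.finrank 𝕜 (LinearMap.ker φ) := by
    have := Module.Dual.finrank_ker_add_one_of_ne_zero hφ
    rw [Module.finrank_fin_fun] at this ⊢
    omega
  let e := LinearEquiv.ofFinrankEq _ _ hker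
  refine ⟨(LinearMap.ker φ).subtype ∘ₗ e, ?_, fun x => ⟨fun hx => ⟨e.symm ⟨x, hx⟩, by simp⟩, ?_⟩⟩
  · exact (LinearMap.ker φ).subtype_injective.comp e.injective
  · rintro ⟨z, rfl⟩
    exact (e z).2

variable [Algebra 𝕜 K] [Fintype τ]

variable (K) in
/-- Pullback of polynomials along a linear map of coordinate spaces. -/
def restrictAlong (A : (τ → 𝕜) →ₗ[𝕜] (σ → 𝕜)) : MvPolynomial σ K →ₐ[K] MvPolynomial τ K :=
  aeval fun j => linearForm K (LinearMap.proj j ∘ₗ A)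

theorem restrictAlong_X (A : (τ → 𝕜) →ₗ[𝕜] (σ → 𝕜)) (j : σ) :
    restrictAlong K A (X j) = linearForm K (LinearMap.proj j ∘ₗ A) :=
  aeval_X _ j

theorem isHomogeneous_restrictAlong (A : (τ → 𝕜) →ₗ[𝕜] (σ → 𝕜)) {e : ℕ} {f : MvPolynomial σ K}
    (hf : f.IsHomogeneous e) : (restrictAlong K A f).IsHomogeneous e := by
  rw [← one_mul e]
  exact hf.aeval _ fun _ => isHomogeneous_linearForm _

theorem restrictAlong_mem_orderIdeal (A : (τ → 𝕜) →ₗ[𝕜] (σ → 𝕜)) {v : τ → 𝕜} {s : ℕ}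
    {f : MvPolynomial σ K} (hf : f ∈ orderIdeal (algebraMap 𝕜 K ∘ A v) s) :
    restrictAlong K A f ∈ orderIdeal (algebraMap 𝕜 K ∘ v) s := by
  have hcomp : (lineExpansion (algebraMap 𝕜 K ∘ v)).comp (restrictAlong K A) =
      (Polynomial.mapAlgHom (restrictAlong K A)).comp (lineExpansion (algebraMap 𝕜 K ∘ A v)) := by
    refine algHom_ext fun j => ?_
    simp only [AlgHom.comp_apply, restrictAlong_X, lineExpansion_X,
      lineExpansion_of_isHomogeneous_one _ (isHomogeneous_linearForm _), eval_linearForm]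
    simp [restrictAlong_X, ← algebraMap_eq]
  have hdvd := map_dvd (Polynomial.mapAlgHom (restrictAlong K A)) (mem_orderIdeal.1 hf)
  rw [map_pow, Polynomial.coe_mapAlgHom, Polynomial.map_X] at hdvd
  rw [mem_orderIdeal]
  exact (DFunLike.congr_fun hcomp f).symm ▸ hdvd

variable [Fintype σ]

theorem restrictAlong_linearForm (A : (τ → 𝕜) →ₗ[𝕜] (σ → 𝕜)) (φ : Module.Dual 𝕜 (σ → 𝕜)) :
    restrictAlong K A (linearForm K φ) = linearForm K (φ ∘ₗ A) := by
  have hφ : φ ∘ₗ A = ∑ j, φ (Pi.single j 1) • (LinearMap.proj j ∘ₗ A) := by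
    refine LinearMap.ext fun v => ?_
    simp [dual_apply_eq_sum φ (A v)]
  rw [hφ, map_sum, linearForm_apply, map_sum]
  refine sum_congr rfl fun j _ => ?_
  rw [map_mul, restrictAlong_X, map_smul, ← algebraMap_eq, AlgHom.commutes, Algebra.smul_def,
    IsScalarTower.algebraMap_apply 𝕜 K (MvPolynomial τ K)]

theorem linearForm_dvd_of_restrictAlong_eq_zero {A : (τ → 𝕜) →ₗ[𝕜] (σ → 𝕜)}
    {φ : Module.Dual 𝕜 (σ → 𝕜)} (hφ : φ ≠ 0) (hA : Function.Injective A)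
    (hexact : Function.Exact A φ) {f : MvPolynomial σ K} (hf : restrictAlong K A f = 0) :
    linearForm K φ ∣ f := by
  obtain ⟨B, u, hAB⟩ := exists_apply_eq_sub_smul hφ hA hexact
  have hcomp : (Ideal.Quotient.mkₐ K (Ideal.span {linearForm K φ})).comp
      ((restrictAlong K B).comp (restrictAlong K A)) =
      Ideal.Quotient.mkₐ K (Ideal.span {linearForm K φ}) := by
    refine algHom_ext fun j => ?_
    have hj : (LinearMap.proj j ∘ₗ A) ∘ₗ B = LinearMap.proj j - u j • φ := by
      refine LinearMap.ext fun x => ?_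
      simp [hAB, mul_comm]
    simp only [AlgHom.comp_apply, restrictAlong_X, restrictAlong_linearForm, hj, map_sub,
      map_smul, linearForm_proj, Ideal.Quotient.mkₐ_eq_mk]
    rw [sub_eq_self, Ideal.Quotient.eq_zero_iff_mem, Algebra.smul_def]
    exact Ideal.mul_mem_left _ _ (Ideal.mem_span_singleton_self _)
  rw [← Ideal.mem_span_singleton, ← Ideal.Quotient.eq_zero_iff_mem]
  have hf' := DFunLike.congr_fun hcomp f
  simpa only [AlgHom.comp_apply, hf, map_zero, Ideal.Quotient.mkₐ_eq_mk] using hf'.symm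

end Restriction

end Polynomials

section Arrangement

variable {𝕜 E ι : Type*} [Field 𝕜] [AddCommGroup E] [Module 𝕜 E]
  {I J : Finset ι} {ℓ : ι → Module.Dual 𝕜 E} {i : ι} {C : Set E}

/-- The hyperplanes `ℓ i = 0`, `i ∈ I`, have only the origin in common. -/
def IsEssential (I : Finset ι) (ℓ : ι → Module.Dual 𝕜 E) : Prop :=
  ∀ v, (∀ i ∈ I, ℓ i v = 0) → v = 0

/-- The vector `v` spans a one-dimensional intersection of hyperplanes `ℓ i = 0`, `i ∈ I`: it
represents a point of the projective arrangement. -/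
def IsArrangementPoint (I : Finset ι) (ℓ : ι → Module.Dual 𝕜 E) (v : E) : Prop :=
  v ≠ 0 ∧ ∀ w, (∀ i ∈ I, ℓ i v = 0 → ℓ i w = 0) → w ∈ Submodule.span 𝕜 {v}

/-- The number of hyperplanes of the arrangement that miss `v`. -/
def nonzeroCount (I : Finset ι) (ℓ : ι → Module.Dual 𝕜 E) (v : E) : ℕ :=
  #{i ∈ I | ℓ i v ≠ 0}

/-- The vanishing order prescribed at `v` in degree `e`: one more on the lines that miss `C` than on
those that meet it. It is expressed through the hyperplanes missing `v`, which makes it invariant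
under restriction to a hyperplane. If `e = #I - dim E`, it is the number of hyperplanes through `v`
minus `dim E - 1`, respectively `dim E - 2`. -/
def adjointOrder (I : Finset ι) (ℓ : ι → Module.Dual 𝕜 E) (C : Set E) (e : ℕ) (v : E) : ℕ :=
  e + (if v ∈ C ∨ -v ∈ C then 1 else 2) - nonzeroCount I ℓ v

theorem IsArrangementPoint.mono {v : E} (hv : IsArrangementPoint I ℓ v) (h : I ⊆ J) :
    IsArrangementPoint J ℓ v :=
  ⟨hv.1, fun w hw => hv.2 w fun i hi => hw i (h hi)⟩

theorem nonzeroCount_le_card (I : Finset ι) (ℓ : ι → Module.Dual 𝕜 E) (v : E) :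
    nonzeroCount I ℓ v ≤ #I :=
  card_filter_le _ _

theorem nonzeroCount_erase_of_eq_zero {v : E} (hv : ℓ i v = 0) :
    nonzeroCount (I.erase i) ℓ v = nonzeroCount I ℓ v := by
  rw [nonzeroCount, filter_erase, erase_eq_of_notMem (by simp [hv]), nonzeroCount]

theorem nonzeroCount_erase_add_one {v : E} (hi : i ∈ I) (hv : ℓ i v ≠ 0) :
    nonzeroCount (I.erase i) ℓ v + 1 = nonzeroCount I ℓ v := by
  rw [nonzeroCount, filter_erase, card_erase_add_one (by simp [hi, hv]), nonzeroCount]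

theorem IsEssential.nonempty [Nontrivial E] (h : IsEssential I ℓ) : I.Nonempty := by
  obtain ⟨v, hv⟩ := exists_ne (0 : E)
  by_contra hI
  exact hv (h v fun i hi => absurd ⟨i, hi⟩ hI)

theorem IsEssential.exists_mem_ker_ne_zero (h : IsEssential I ℓ) (i : ι)
    (hdim : 2 ≤ Module.finrank 𝕜 E) : ∃ j ∈ I, ∃ x, ℓ i x = 0 ∧ ℓ j x ≠ 0 := by
  obtain ⟨x, hx0, hx⟩ : ∃ x ≠ 0, ℓ i x = 0 := by
    by_contra! hker
    have hinj : Function.Injective (ℓ i) :=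
      (injective_iff_map_eq_zero _).2 fun x hx => by_contra fun hx0 => hker x hx0 hx
    have hle := LinearMap.finrank_le_finrank_of_injective hinj
    rw [Module.finrank_self] at hle
    omega
  by_contra! hj
  exact hx0 (h x fun j hjI => hj j hjI x hx)

theorem IsEssential.isArrangementPoint_of_erase (h : IsEssential I ℓ) {v : E} (hv : v ≠ 0)
    (hvi : ∀ j ∈ I.erase i, ℓ j v = 0) : IsArrangementPoint I ℓ v := by
  refine ⟨hv, fun w hw => ?_⟩
  have hi : i ∈ I ∧ ℓ i v ≠ 0 := by
    by_contra hi
    refine hv (h v fun j hj => ?_)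
    obtain rfl | hji := eq_or_ne j i
    · exact by_contra fun hj0 => hi ⟨hj, hj0⟩
    · exact hvi j (mem_erase.2 ⟨hji, hj⟩)
  refine Submodule.mem_span_singleton.2 ⟨ℓ i w / ℓ i v, (sub_eq_zero.1 (h _ fun j hj => ?_)).symm⟩
  obtain rfl | hji := eq_or_ne j i
  · simp [hi.2]
  · have hjv := hvi j (mem_erase.2 ⟨hji, hj⟩)
    simp [hjv, hw j hj hjv]

theorem span_eq_top_of_ker_le {φ ψ : Module.Dual 𝕜 E} {W : Submodule 𝕜 E}
    (hφ : LinearMap.ker φ ≤ W) (hψ : LinearMap.ker ψ ≤ W) {x : E} (hx : φ x = 0)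
    (hxψ : ψ x ≠ 0) : W = ⊤ := by
  refine eq_top_iff.2 fun z _ => ?_
  have hz : z - (ψ z / ψ x) • x ∈ W := hψ (by simp [hxψ])
  simpa using W.add_mem hz (W.smul_mem (ψ z / ψ x) (hφ hx))

section Restriction

variable {F : Type*} [AddCommGroup F] [Module 𝕜 F] {A : F →ₗ[𝕜] E}

/-- The hyperplanes of an arrangement that do not contain the range of `A`. -/
def restrictedIndices (I : Finset ι) (ℓ : ι → Module.Dual 𝕜 E) (A : F →ₗ[𝕜] E) : Finset ι :=
  {j ∈ I | ℓ j ∘ₗ A ≠ 0}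

theorem restrictedIndices_subset_erase (I : Finset ι) (hA : ℓ i ∘ₗ A = 0) :
    restrictedIndices I ℓ A ⊆ I.erase i := by
  intro j hj
  obtain ⟨hjI, hjA⟩ := mem_filter.1 hj
  exact mem_erase.2 ⟨fun h => hjA (h ▸ hA), hjI⟩

theorem forall_restrictedIndices_iff {p : 𝕜 → Prop} (hp : p 0) (z : F) :
    (∀ j ∈ restrictedIndices I ℓ A, p ((ℓ j ∘ₗ A) z)) ↔ ∀ j ∈ I, p (ℓ j (A z)) := by
  refine ⟨fun h j hj => ?_, fun h j hj => h j (mem_filter.1 hj).1⟩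
  by_cases hjA : ℓ j ∘ₗ A = 0
  · rwa [← LinearMap.comp_apply, hjA]
  · exact h j (mem_filter.2 ⟨hj, hjA⟩)

theorem IsEssential.restrict (h : IsEssential I ℓ) (hA : Function.Injective A) :
    IsEssential (restrictedIndices I ℓ A) fun j => ℓ j ∘ₗ A := fun z hz =>
  (map_eq_zero_iff A hA).1
    (h (A z) ((forall_restrictedIndices_iff (p := fun x : 𝕜 => x = 0) rfl z).1 hz))

theorem IsArrangementPoint.of_restrict (hi : i ∈ I) (hA : Function.Injective A)
    (hexact : Function.Exact A (ℓ i)) {z : F}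
    (hz : IsArrangementPoint (restrictedIndices I ℓ A) (fun j => ℓ j ∘ₗ A) z) :
    IsArrangementPoint I ℓ (A z) := by
  refine ⟨(map_ne_zero_iff A hA).2 hz.1, fun w hw => ?_⟩
  obtain ⟨y, rfl⟩ := (hexact w).1 (hw i hi (hexact.apply_apply_eq_zero z))
  obtain ⟨c, rfl⟩ := Submodule.mem_span_singleton.1
    (hz.2 y fun j hj => hw j (mem_filter.1 hj).1)
  exact Submodule.mem_span_singleton.2 ⟨c, (map_smul A c z).symm⟩

theorem nonzeroCount_restrict (I : Finset ι) (ℓ : ι → Module.Dual 𝕜 E) (A : F →ₗ[𝕜] E) (z : F) :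
    nonzeroCount (restrictedIndices I ℓ A) (fun j => ℓ j ∘ₗ A) z = nonzeroCount I ℓ (A z) := by
  rw [nonzeroCount, restrictedIndices, filter_filter, nonzeroCount]
  refine congrArg card (filter_congr fun j _ => ⟨fun h => h.2, fun h => ⟨fun h0 => h ?_, h⟩⟩)
  exact DFunLike.congr_fun h0 z

theorem adjointOrder_restrict (I : Finset ι) (ℓ : ι → Module.Dual 𝕜 E) (A : F →ₗ[𝕜] E)
    (C : Set E) (e : ℕ) (z : F) :
    adjointOrder (restrictedIndices I ℓ A) (fun j => ℓ j ∘ₗ A) (A ⁻¹' C) e z =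
      adjointOrder I ℓ C e (A z) := by
  rw [adjointOrder, nonzeroCount_restrict, adjointOrder]
  simp only [Set.mem_preimage, map_neg]

end Restriction

section Ordered

variable [LinearOrder 𝕜]

/-- The polyhedral cone on which all the functionals `ℓ i`, `i ∈ I`, are nonnegative. -/
def arrangementCone (I : Finset ι) (ℓ : ι → Module.Dual 𝕜 E) : Set E :=
  {v | ∀ i ∈ I, 0 ≤ ℓ i v}

theorem zero_mem_arrangementCone (I : Finset ι) (ℓ : ι → Module.Dual 𝕜 E) :
    0 ∈ arrangementCone I ℓ :=
  fun i _ => (map_zero (ℓ i)).ge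

theorem arrangementCone_antitone (h : I ⊆ J) : arrangementCone J ℓ ⊆ arrangementCone I ℓ :=
  fun _ hv i hi => hv i (h hi)

theorem arrangementCone_restrict {F : Type*} [AddCommGroup F] [Module 𝕜 F] (I : Finset ι)
    (ℓ : ι → Module.Dual 𝕜 E) (A : F →ₗ[𝕜] E) :
    arrangementCone (restrictedIndices I ℓ A) (fun j => ℓ j ∘ₗ A) = A ⁻¹' arrangementCone I ℓ :=
  Set.ext fun z => forall_restrictedIndices_iff (I := I) (ℓ := ℓ) (A := A)
    (p := fun x : 𝕜 => 0 ≤ x) le_rfl z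

theorem exists_pos_of_span_eq_top {S : Set E} {φ : Module.Dual 𝕜 E}
    (hS : Submodule.span 𝕜 S = ⊤) (hφ : φ ≠ 0) (hnonneg : ∀ v ∈ S, 0 ≤ φ v) :
    ∃ v ∈ S, 0 < φ v := by
  by_contra! hle
  exact hφ (LinearMap.ext_on hS fun v hv => le_antisymm (hle v hv) (hnonneg v hv))

variable [IsStrictOrderedRing 𝕜]

theorem convex_arrangementCone (I : Finset ι) (ℓ : ι → Module.Dual 𝕜 E) :
    Convex 𝕜 (arrangementCone I ℓ) := by
  intro x hx y hy a b ha hb _ i hi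
  rw [map_add, map_smul, map_smul, smul_eq_mul, smul_eq_mul]
  exact add_nonneg (mul_nonneg ha (hx i hi)) (mul_nonneg hb (hy i hi))

theorem IsEssential.eq_zero_of_mem_arrangementCone (h : IsEssential I ℓ) {v : E}
    (hv : v ∈ arrangementCone I ℓ) (hv' : -v ∈ arrangementCone I ℓ) : v = 0 :=
  h v fun i hi => le_antisymm (by simpa using hv' i hi) (hv i hi)

theorem exists_wall_of_pos {g : ι → Module.Dual 𝕜 E} {h : ι → 𝕜} {u w : E}
    (hu : ∀ j ∈ I, g j u ≤ h j) (hw : ∃ k ∈ I, 0 < g k w) :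
    ∃ t : 𝕜, 0 ≤ t ∧ (∀ j ∈ I, g j (u + t • w) ≤ h j) ∧
      ∃ j ∈ I, 0 < g j w ∧ g j (u + t • w) = h j := by
  obtain ⟨k, hk, hkw⟩ := hw
  obtain ⟨m, hm, hmin⟩ := exists_min_image {j ∈ I | 0 < g j w} (fun j => (h j - g j u) / g j w)
    ⟨k, mem_filter.2 ⟨hk, hkw⟩⟩
  obtain ⟨hmI, hmw⟩ := mem_filter.1 hm
  have ht : 0 ≤ (h m - g m u) / g m w := div_nonneg (sub_nonneg.2 (hu m hmI)) hmw.le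
  refine ⟨_, ht, fun j hj => ?_, m, hmI, hmw, ?_⟩
  · rw [map_add, map_smul, smul_eq_mul]
    rcases lt_or_ge 0 (g j w) with hjw | hjw
    · have hle := hmin j (mem_filter.2 ⟨hj, hjw⟩)
      rw [le_div_iff₀ hjw] at hle
      linarith
    · linarith [hu j hj, mul_nonpos_of_nonneg_of_nonpos ht hjw]
  · rw [map_add, map_smul, smul_eq_mul, div_mul_cancel₀ _ hmw.ne', add_sub_cancel]

theorem exists_mem_facet_of_neg {v u : E} (hv : v ∈ arrangementCone I ℓ)
    (hu : ∃ k ∈ I, ℓ k u < 0) :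
    ∃ t : 𝕜, 0 ≤ t ∧ v + t • u ∈ arrangementCone I ℓ ∧ ∃ j ∈ I, ℓ j (v + t • u) = 0 := by
  obtain ⟨t, ht, hcone, j, hj, -, hj0⟩ := exists_wall_of_pos (g := fun j => -ℓ j)
    (h := fun _ => 0) (fun j hj => by simpa using hv j hj) (by simpa using hu)
  exact ⟨t, ht, fun k hk => neg_nonpos.1 (hcone k hk), j, hj, neg_eq_zero.1 hj0⟩

theorem arrangementCone_subset_of_facets_subset {j : ι} (hi : i ∈ I) (hj : j ∈ I) (hℓ : ℓ i ≠ 0)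
    {x : E} (hx : ℓ i x = 0) (hxj : ℓ j x ≠ 0) (hC : Convex 𝕜 C)
    (hfacet : ∀ k ∈ I, ∀ w ∈ arrangementCone I ℓ, ℓ k w = 0 → w ∈ C) :
    arrangementCone I ℓ ⊆ C := by
  intro v hv
  obtain ⟨y, hy⟩ := LinearMap.surjective hℓ 1
  let u := y + ((-1 - ℓ j y) / ℓ j x) • x
  have hiu : ℓ i u = 1 := by simp [u, hy, hx]
  have hju : ℓ j u = -1 := by simp [u, hxj]
  obtain ⟨t, ht, htcone, k, hk, hk0⟩ := exists_mem_facet_of_neg (u := u) hv ⟨j, hj, by simp [hju]⟩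
  obtain ⟨s, hs, hscone, m, hm, hm0⟩ :=
    exists_mem_facet_of_neg (u := -u) hv ⟨i, hi, by simp [hiu]⟩
  have hseg := (hC.affine_preimage (AffineMap.lineMap v (v + u))).ordConnected.out
    (x := -s) (y := t) (by simpa [AffineMap.lineMap_apply, add_comm] using hfacet m hm _ hscone hm0)
    (by simpa [AffineMap.lineMap_apply, add_comm] using hfacet k hk _ htcone hk0)
    ⟨neg_nonpos.2 hs, ht⟩
  simpa using hseg

/-- Where the induction continues: a failure of `C = arrangementCone I ℓ` or of full-dimensionality
is inherited by some hyperplane section. -/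
theorem IsEssential.exists_degenerate_facet (h : IsEssential I ℓ) (hℓ : ∀ i ∈ I, ℓ i ≠ 0)
    (hdim : 2 ≤ Module.finrank 𝕜 E) (hC : Convex 𝕜 C)
    (hdeg : arrangementCone I ℓ ⊆ C → Submodule.span 𝕜 (arrangementCone I ℓ) ≠ ⊤) :
    ∃ i ∈ I, arrangementCone I ℓ ∩ LinearMap.ker (ℓ i) ⊆ C →
      ¬ LinearMap.ker (ℓ i) ≤ Submodule.span 𝕜 (arrangementCone I ℓ ∩ LinearMap.ker (ℓ i)) := by
  have := Module.nontrivial_of_finrank_pos (R := 𝕜) (M := E) (by omega)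
  obtain ⟨a, ha⟩ := h.nonempty
  obtain ⟨b, hb, x, hax, hbx⟩ := h.exists_mem_ker_ne_zero a hdim
  by_contra! hnondeg
  have hker : ∀ i ∈ I, LinearMap.ker (ℓ i) ≤ Submodule.span 𝕜 (arrangementCone I ℓ) :=
    fun i hi => (hnondeg i hi).2.trans (Submodule.span_mono Set.inter_subset_left)
  refine hdeg ?_ (span_eq_top_of_ker_le (hker a ha) (hker b hb) hax hbx)
  exact arrangementCone_subset_of_facets_subset ha hb (hℓ a ha) hax hbx hC
    fun k hk w hw hkw => (hnondeg k hk).1 ⟨hw, hkw⟩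

theorem exists_forall_pos_of_forall_exists_pos
    (h : ∀ i ∈ I, ∃ v ∈ arrangementCone J ℓ, 0 < ℓ i v) (hIJ : I ⊆ J) :
    ∃ v ∈ arrangementCone J ℓ, ∀ i ∈ I, 0 < ℓ i v := by
  choose! v hv hpos using h
  refine ⟨∑ i ∈ I, v i, fun j hj => ?_, fun i hi => ?_⟩
  · rw [map_sum]
    exact sum_nonneg fun k hk => hv k hk j hj
  · rw [map_sum]
    exact sum_pos' (fun k hk => hv k hk i (hIJ hi)) ⟨i, hi, hpos i hi⟩

theorem not_arrangementCone_erase_subset_of_facet_point (hi : i ∈ I) (hℓ : ℓ i ≠ 0) {p : E}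
    (hp : ℓ i p = 0) (hpos : ∀ j ∈ I.erase i, 0 < ℓ j p) :
    ¬ arrangementCone (I.erase i) ℓ ⊆ arrangementCone I ℓ := by
  intro hred
  obtain ⟨u, hu⟩ := LinearMap.surjective hℓ (-1)
  obtain ⟨M, hM⟩ := ((I.erase i).image fun j => -ℓ j u / ℓ j p).bddAbove
  have hmem : M • p + u ∈ arrangementCone (I.erase i) ℓ := by
    intro j hj
    have hle := hM (mem_coe.2 (mem_image_of_mem _ hj))
    rw [div_le_iff₀ (hpos j hj)] at hle
    rw [map_add, map_smul, smul_eq_mul]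
    linarith
  have hneg := hred hmem i hi
  rw [map_add, map_smul, hp, smul_zero, hu] at hneg
  linarith

end Ordered

end Arrangement

section Uniqueness

variable {𝕜 ι : Type*} {K : Type*} [Field 𝕜] [Field K] [Algebra 𝕜 K] {I : Finset ι} {i : ι}
  {e : ℕ}

section Coordinates

variable {σ : Type*} {ℓ : ι → Module.Dual 𝕜 (σ → 𝕜)} {C : Set (σ → 𝕜)}

variable (K) in
/-- The forms of degree `e` over `K` vanishing to the prescribed order `adjointOrder` at all points
of the arrangement. The arrangement and the set `C` are defined over the subfield `𝕜`. -/
def adjointSpace (I : Finset ι) (ℓ : ι → Module.Dual 𝕜 (σ → 𝕜)) (C : Set (σ → 𝕜)) (e : ℕ) :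
    Submodule K (MvPolynomial σ K) :=
  homogeneousSubmodule σ K e ⊓ ⨅ (v) (_ : IsArrangementPoint I ℓ v),
    (orderIdeal (algebraMap 𝕜 K ∘ v) (adjointOrder I ℓ C e v)).restrictScalars K

theorem mem_adjointSpace {f : MvPolynomial σ K} :
    f ∈ adjointSpace K I ℓ C e ↔ f.IsHomogeneous e ∧ ∀ v, IsArrangementPoint I ℓ v →
      f ∈ orderIdeal (algebraMap 𝕜 K ∘ v) (adjointOrder I ℓ C e v) := by
  simp [adjointSpace]

theorem restrictAlong_mem_adjointSpace {τ : Type*} [Fintype τ] {A : (τ → 𝕜) →ₗ[𝕜] (σ → 𝕜)}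
    (hi : i ∈ I) (hA : Function.Injective A) (hexact : Function.Exact A (ℓ i))
    {f : MvPolynomial σ K} (hf : f ∈ adjointSpace K I ℓ C e) :
    restrictAlong K A f ∈
      adjointSpace K (restrictedIndices I ℓ A) (fun j => ℓ j ∘ₗ A) (A ⁻¹' C) e := by
  obtain ⟨hhom, horder⟩ := mem_adjointSpace.1 hf
  refine mem_adjointSpace.2 ⟨isHomogeneous_restrictAlong A hhom, fun z hz => ?_⟩
  rw [adjointOrder_restrict]
  exact restrictAlong_mem_orderIdeal A (horder _ (hz.of_restrict hi hA hexact))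

variable [Fintype σ]

theorem mem_adjointSpace_erase_of_linearForm_mul_mem (hi : i ∈ I) (hℓ : ℓ i ≠ 0)
    {g : MvPolynomial σ K} (hg : linearForm K (ℓ i) * g ∈ adjointSpace K I ℓ C (e + 1)) :
    g ∈ adjointSpace K (I.erase i) ℓ C e := by
  obtain ⟨hhom, horder⟩ := mem_adjointSpace.1 hg
  have hform : (linearForm K (ℓ i)).IsHomogeneous 1 := isHomogeneous_linearForm _
  refine mem_adjointSpace.2
    ⟨isHomogeneous_of_mul_left hform (linearForm_ne_zero hℓ) hhom, fun v hv => ?_⟩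
  have hmul := horder v (hv.mono (erase_subset i I))
  by_cases hiv : ℓ i v = 0
  · rcases Nat.eq_zero_or_pos (adjointOrder (I.erase i) ℓ C e v) with hzero | hpos
    · simp [hzero, mem_orderIdeal]
    · refine mem_orderIdeal_of_mul_of_eval_eq_zero hform (linearForm_ne_zero hℓ)
        (by rw [eval_linearForm, hiv, map_zero]) (orderIdeal_antitone _ ?_ hmul)
      rw [adjointOrder, nonzeroCount_erase_of_eq_zero hiv] at hpos ⊢
      rw [adjointOrder]
      omega
  · refine mem_orderIdeal_of_mul_of_eval_ne_zero hform
      (by simpa [eval_linearForm] using hiv) (orderIdeal_antitone _ ?_ hmul)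
    rw [adjointOrder, adjointOrder, ← nonzeroCount_erase_add_one hi hiv]
    omega

theorem IsEssential.erase_of_linearForm_mul_mem_adjointSpace (hI : IsEssential I ℓ)
    (hℓ : ℓ i ≠ 0) {g : MvPolynomial σ K} (hg0 : g ≠ 0)
    (hg : linearForm K (ℓ i) * g ∈ adjointSpace K I ℓ C (e + 1)) : IsEssential (I.erase i) ℓ := by
  intro v hv
  by_contra hv0
  have hiv : ℓ i v ≠ 0 := fun hiv => hv0 <| hI v fun j hj => by
    obtain rfl | hji := eq_or_ne j i
    exacts [hiv, hv j (mem_erase.2 ⟨hji, hj⟩)]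
  obtain ⟨hhom, horder⟩ := mem_adjointSpace.1 hg
  have hform : (linearForm K (ℓ i)).IsHomogeneous 1 := isHomogeneous_linearForm _
  have hcount : nonzeroCount I ℓ v ≤ 1 := by
    refine (card_le_card fun j hj => ?_).trans (card_singleton i).le
    obtain ⟨hjI, hjv⟩ := mem_filter.1 hj
    exact mem_singleton.2 (by_contra fun hji => hjv (hv j (mem_erase.2 ⟨hji, hjI⟩)))
  have horder_le : e + 1 ≤ adjointOrder I ℓ C (e + 1) v := by
    rw [adjointOrder]
    split_ifs <;> omega
  refine hg0 (eq_zero_of_mem_orderIdeal_of_lt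
    (isHomogeneous_of_mul_left hform (linearForm_ne_zero hℓ) hhom) e.lt_succ_self
    (mem_orderIdeal_of_mul_of_eval_ne_zero (w := algebraMap 𝕜 K ∘ v) hform
      (by simpa [eval_linearForm] using hiv)
      (orderIdeal_antitone _ horder_le (horder v (hI.isArrangementPoint_of_erase hv0 hv)))))

theorem IsEssential.exists_eq_linearForm_mul (hI : IsEssential I ℓ) (hi : i ∈ I) (hℓ : ℓ i ≠ 0)
    {f : MvPolynomial σ K} (hf : f ∈ adjointSpace K I ℓ C e) (hf0 : f ≠ 0)
    (hdvd : linearForm K (ℓ i) ∣ f) :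
    IsEssential (I.erase i) ℓ ∧ ∃ e', e = e' + 1 ∧
      ∃ g ∈ adjointSpace K (I.erase i) ℓ C e', linearForm K (ℓ i) * g = f := by
  obtain ⟨g, rfl⟩ := hdvd
  cases e with
  | zero => exact absurd (mul_eq_zero_of_isHomogeneous_zero (isHomogeneous_linearForm _)
      (mem_adjointSpace.1 hf).1) hf0
  | succ e' =>
    exact ⟨hI.erase_of_linearForm_mul_mem_adjointSpace hℓ (right_ne_zero_of_mul hf0) hf, e', rfl,
      g, mem_adjointSpace_erase_of_linearForm_mul_mem hi hℓ hf, rfl⟩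

end Coordinates

theorem ker_le_span_inter_ker {E F : Type*} [AddCommGroup E] [Module 𝕜 E] [AddCommGroup F]
    [Module 𝕜 F] {A : F →ₗ[𝕜] E} {φ : Module.Dual 𝕜 E} (hexact : Function.Exact A φ) {S : Set E}
    (hS : Submodule.span 𝕜 (A ⁻¹' S) = ⊤) :
    LinearMap.ker φ ≤ Submodule.span 𝕜 (S ∩ LinearMap.ker φ) := by
  have hrange : Set.range A = LinearMap.ker φ := (Set.ext hexact).symm
  rw [← hrange, ← Set.image_preimage_eq_inter_range, ← Submodule.map_span, hS, Submodule.map_top,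
    hexact.linearMap_ker_eq]

variable [LinearOrder 𝕜] [IsStrictOrderedRing 𝕜]

theorem IsEssential.exists_notMem_and_neg_notMem {E : Type*} [AddCommGroup E] [Module 𝕜 E]
    {ℓ : ι → Module.Dual 𝕜 E} {C : Set E} (hI : IsEssential I ℓ) (hC0 : 0 ∈ C)
    (hC : C ⊆ arrangementCone I ℓ)
    (hdeg : arrangementCone I ℓ ⊆ C → Submodule.span 𝕜 (arrangementCone I ℓ) ≠ ⊤) :
    ∃ w ≠ 0, w ∉ C ∧ -w ∉ C := by
  by_cases hsub : arrangementCone I ℓ ⊆ C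
  · obtain ⟨w, -, hw⟩ := SetLike.exists_of_lt (lt_top_iff_ne_top.2 (hdeg hsub))
    have hnotMem : ∀ x ∉ Submodule.span 𝕜 (arrangementCone I ℓ), x ∉ C :=
      fun x hx hxC => hx (Submodule.subset_span (hC hxC))
    exact ⟨w, fun hw0 => hw (hw0 ▸ Submodule.zero_mem _), hnotMem w hw,
      hnotMem (-w) fun hneg => hw (neg_mem_iff.1 hneg)⟩
  · obtain ⟨w, hw, hwC⟩ := Set.not_subset.1 hsub
    have hw0 : w ≠ 0 := fun hw0 => hwC (hw0 ▸ hC0)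
    exact ⟨w, hw0, hwC, fun hneg => hw0 (hI.eq_zero_of_mem_arrangementCone hw (hC hneg))⟩

theorem adjointSpace_eq_bot_of_unique {σ : Type*} [Unique σ] {ℓ : ι → Module.Dual 𝕜 (σ → 𝕜)}
    {C : Set (σ → 𝕜)} (hI : IsEssential I ℓ) (hC0 : 0 ∈ C) (hC : C ⊆ arrangementCone I ℓ)
    (hcard : #I ≤ e + 1)
    (hdeg : #I = e + 1 → arrangementCone I ℓ ⊆ C →
      Submodule.span 𝕜 (arrangementCone I ℓ) ≠ ⊤) :
    adjointSpace K I ℓ C e = ⊥ := by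
  obtain ⟨w, hw0, hw⟩ : ∃ w ≠ 0, 1 ≤ adjointOrder I ℓ C e w := by
    rcases hcard.eq_or_lt with heq | hlt
    · obtain ⟨w, hw0, hw, hneg⟩ := hI.exists_notMem_and_neg_notMem hC0 hC (hdeg heq)
      refine ⟨w, hw0, ?_⟩
      have := nonzeroCount_le_card I ℓ w
      rw [adjointOrder, if_neg (not_or.2 ⟨hw, hneg⟩)]
      omega
    · refine ⟨1, one_ne_zero, ?_⟩
      have := nonzeroCount_le_card I ℓ 1
      rw [adjointOrder]
      split_ifs <;> omega
  have hw_default : w default ≠ 0 := fun h =>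
    hw0 (funext fun j => by rw [Unique.eq_default j, h]; rfl)
  have hpoint : IsArrangementPoint I ℓ w := ⟨hw0, fun u _ => Submodule.mem_span_singleton.2
    ⟨u default / w default, funext fun j => by simp [Unique.eq_default j, hw_default]⟩⟩
  refine eq_bot_iff.2 fun f hf => ?_
  obtain ⟨hhom, horder⟩ := mem_adjointSpace.1 hf
  exact eq_zero_of_isHomogeneous_of_eval_eq_zero hhom
    (fun h => hw_default (by simpa using congrFun h default))
    (eval_eq_zero_of_mem_orderIdeal hw (horder w hpoint))

/-- Induction on the number of hyperplanes: by induction the restriction of `f` to a hyperplane of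
the arrangement vanishes, so `f` is divisible by its equation, and the quotient satisfies the
hypotheses for the arrangement without that hyperplane. -/
theorem adjointSpace_eq_bot {N : ℕ} {ℓ : ι → Module.Dual 𝕜 (Fin (N + 1) → 𝕜)}
    {C : Set (Fin (N + 1) → 𝕜)} (hI : IsEssential I ℓ) (hℓ : ∀ i ∈ I, ℓ i ≠ 0)
    (hconv : Convex 𝕜 C) (hC0 : 0 ∈ C) (hC : C ⊆ arrangementCone I ℓ) (hcard : #I ≤ e + (N + 1))
    (hdeg : #I = e + (N + 1) → arrangementCone I ℓ ⊆ C →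
      Submodule.span 𝕜 (arrangementCone I ℓ) ≠ ⊤) :
    adjointSpace K I ℓ C e = ⊥ := by
  induction I using Finset.strongInduction generalizing N e with
  | H I ih =>
  obtain _ | M := N
  · have : Unique (Fin (0 + 1)) := inferInstanceAs (Unique (Fin 1))
    exact adjointSpace_eq_bot_of_unique hI hC0 hC hcard hdeg
  obtain ⟨i, hi, hfacet⟩ : ∃ i ∈ I, #I = e + (M + 1 + 1) →
      arrangementCone I ℓ ∩ LinearMap.ker (ℓ i) ⊆ C →
      ¬ LinearMap.ker (ℓ i) ≤ Submodule.span 𝕜 (arrangementCone I ℓ ∩ LinearMap.ker (ℓ i)) := by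
    by_cases htight : #I = e + (M + 1 + 1)
    · obtain ⟨i, hi, hfacet⟩ := hI.exists_degenerate_facet hℓ (by simp) hconv (hdeg htight)
      exact ⟨i, hi, fun _ => hfacet⟩
    · exact hI.nonempty.imp fun i hi => ⟨hi, fun h => absurd h htight⟩
  obtain ⟨A, hA, hexact⟩ := exists_hyperplane_parametrization (hℓ i hi)
  have hsub := restrictedIndices_subset_erase I hexact.linearMap_comp_eq_zero
  have hsub_card := (card_le_card hsub).trans_eq (card_erase_of_mem hi)
  have hrestrict :
      adjointSpace K (restrictedIndices I ℓ A) (fun j => ℓ j ∘ₗ A) (A ⁻¹' C) e = ⊥ := by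
    refine ih _ (hsub.trans_ssubset (erase_ssubset hi)) (hI.restrict hA)
      (fun j hj => (mem_filter.1 hj).2) (hconv.linear_preimage A) (by simpa using hC0)
      (arrangementCone_restrict I ℓ A ▸ Set.preimage_mono hC) (by omega) fun htight hCA hspan => ?_
    rw [arrangementCone_restrict] at hCA hspan
    refine hfacet (by omega) (fun x ⟨hx, hxi⟩ => ?_) (ker_le_span_inter_ker hexact hspan)
    obtain ⟨z, rfl⟩ := (hexact x).1 hxi
    exact hCA hx
  refine eq_bot_iff.2 fun f hf => by_contra fun hf0 => ?_
  have hdvd := linearForm_dvd_of_restrictAlong_eq_zero (hℓ i hi) hA hexact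
    ((Submodule.mem_bot K).1 (hrestrict ▸ restrictAlong_mem_adjointSpace hi hA hexact hf))
  obtain ⟨hIi, e', rfl, g, hg, rfl⟩ := hI.exists_eq_linearForm_mul hi (hℓ i hi) hf hf0 hdvd
  have hmono : arrangementCone I ℓ ⊆ arrangementCone (I.erase i) ℓ :=
    arrangementCone_antitone (erase_subset i I)
  have hg0 := ih _ (e := e') (erase_ssubset hi) hIi (fun j hj => hℓ j (mem_of_mem_erase hj)) hconv
    hC0 (hC.trans hmono) (by rw [card_erase_of_mem hi]; omega) fun htight hCi => by
      rw [(hCi.trans hC).antisymm hmono]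
      exact hdeg (by rw [card_erase_of_mem hi] at htight; omega) (hmono.trans hCi)
  rw [hg0, Submodule.mem_bot] at hg
  exact hf0 (by rw [hg, mul_zero]; exact Submodule.zero_mem _)

section Rank

variable {N : ℕ} {A : (Fin (N + 1) → 𝕜) →ₗ[𝕜] (Fin (N + 1 + 1) → 𝕜)}
  {ℓ : ι → Module.Dual 𝕜 (Fin (N + 1 + 1) → 𝕜)}

theorem not_arrangementCone_erase_subset_of_span_restrict (hi : i ∈ I) (hℓ : ℓ i ≠ 0)
    (hexact : Function.Exact A (ℓ i)) (hindices : restrictedIndices I ℓ A = I.erase i)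
    (hspan : Submodule.span 𝕜 (arrangementCone (I.erase i) fun j => ℓ j ∘ₗ A) = ⊤) :
    ¬ arrangementCone (I.erase i) ℓ ⊆ arrangementCone I ℓ := by
  obtain ⟨p, -, hp⟩ := exists_forall_pos_of_forall_exists_pos (I := I.erase i) (J := I.erase i)
    (ℓ := fun j => ℓ j ∘ₗ A) (fun j hj => exists_pos_of_span_eq_top hspan
      (mem_filter.1 (hindices.symm ▸ hj : j ∈ restrictedIndices I ℓ A)).2 fun v hv => hv j hj)
    subset_rfl
  exact not_arrangementCone_erase_subset_of_facet_point hi hℓ (hexact.apply_apply_eq_zero p) hp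

theorem restrictAlong_eq_zero_of_redundant (hI : IsEssential I ℓ) (hi : i ∈ I) (hℓ : ℓ i ≠ 0)
    (hA : Function.Injective A) (hexact : Function.Exact A (ℓ i)) (hcard : #I ≤ e + (N + 1 + 1))
    (hred : arrangementCone (I.erase i) ℓ ⊆ arrangementCone I ℓ)
    {f : MvPolynomial (Fin (N + 1 + 1)) K} (hf : f ∈ adjointSpace K I ℓ (arrangementCone I ℓ) e) :
    restrictAlong K A f = 0 := by
  have hsub := restrictedIndices_subset_erase I hexact.linearMap_comp_eq_zero
  have hsub_card := (card_le_card hsub).trans_eq (card_erase_of_mem hi)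
  have hf' := restrictAlong_mem_adjointSpace hi hA hexact hf
  rw [← arrangementCone_restrict, adjointSpace_eq_bot (hI.restrict hA)
    (fun j hj => (mem_filter.1 hj).2) (convex_arrangementCone _ _) (zero_mem_arrangementCone _ _)
    subset_rfl (by omega)] at hf'
  · exact hf'
  · intro htight _ hspan
    have hindices : restrictedIndices I ℓ A = I.erase i :=
      eq_of_subset_of_card_le hsub (by rw [card_erase_of_mem hi]; omega)
    rw [hindices] at hspan
    exact not_arrangementCone_erase_subset_of_span_restrict hi hℓ hexact hindices hspan hred

theorem eq_zero_of_restrictAlong_eq_zero_of_irredundant (hI : IsEssential I ℓ)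
    (hℓ : ∀ i ∈ I, ℓ i ≠ 0) (hi : i ∈ I) (hA : Function.Injective A)
    (hexact : Function.Exact A (ℓ i)) (hcard : #I ≤ e + (N + 1 + 1))
    (hirred : ¬ arrangementCone (I.erase i) ℓ ⊆ arrangementCone I ℓ)
    {f : MvPolynomial (Fin (N + 1 + 1)) K} (hf : f ∈ adjointSpace K I ℓ (arrangementCone I ℓ) e)
    (hfA : restrictAlong K A f = 0) : f = 0 := by
  by_contra hf0
  have hdvd := linearForm_dvd_of_restrictAlong_eq_zero (hℓ i hi) hA hexact hfA
  obtain ⟨hIi, e', rfl, g, hg, rfl⟩ := hI.exists_eq_linearForm_mul hi (hℓ i hi) hf hf0 hdvd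
  rw [adjointSpace_eq_bot hIi (fun j hj => hℓ j (mem_of_mem_erase hj)) (convex_arrangementCone _ _)
    (zero_mem_arrangementCone _ _) (arrangementCone_antitone (erase_subset i I))
    (by rw [card_erase_of_mem hi]; omega) fun _ h => absurd h hirred, Submodule.mem_bot] at hg
  exact hf0 (by rw [hg, mul_zero])

theorem rank_adjointSpace_le_rank_restrict_of_irredundant (hI : IsEssential I ℓ)
    (hℓ : ∀ i ∈ I, ℓ i ≠ 0) (hi : i ∈ I) (hA : Function.Injective A)
    (hexact : Function.Exact A (ℓ i)) (hcard : #I ≤ e + (N + 1 + 1))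
    (hirred : ¬ arrangementCone (I.erase i) ℓ ⊆ arrangementCone I ℓ) :
    Module.rank K (adjointSpace K I ℓ (arrangementCone I ℓ) e) ≤
      Module.rank K (adjointSpace K (restrictedIndices I ℓ A) (fun j => ℓ j ∘ₗ A)
        (arrangementCone (restrictedIndices I ℓ A) fun j => ℓ j ∘ₗ A) e) := by
  rw [arrangementCone_restrict]
  refine LinearMap.rank_le_of_injective ((restrictAlong K A).toLinearMap.restrict
    fun _ => restrictAlong_mem_adjointSpace hi hA hexact) ?_
  refine (injective_iff_map_eq_zero _).2 fun f hf => Subtype.ext ?_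
  exact eq_zero_of_restrictAlong_eq_zero_of_irredundant hI hℓ hi hA hexact hcard hirred f.2
    (congrArg Subtype.val hf)

theorem linearForm_dvd_of_mem_adjointSpace_of_redundant (hI : IsEssential I ℓ) (hi : i ∈ I)
    (hℓ : ℓ i ≠ 0) (hcard : #I ≤ e + (N + 1 + 1))
    (hred : arrangementCone (I.erase i) ℓ ⊆ arrangementCone I ℓ)
    {f : MvPolynomial (Fin (N + 1 + 1)) K} (hf : f ∈ adjointSpace K I ℓ (arrangementCone I ℓ) e) :
    linearForm K (ℓ i) ∣ f := by
  obtain ⟨A, hA, hexact⟩ := exists_hyperplane_parametrization hℓ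
  exact linearForm_dvd_of_restrictAlong_eq_zero hℓ hA hexact
    (restrictAlong_eq_zero_of_redundant hI hi hℓ hA hexact hcard hred hf)

theorem adjointSpace_le_map_mulLeft_of_redundant (hI : IsEssential I ℓ) (hi : i ∈ I)
    (hℓ : ℓ i ≠ 0) (hcard : #I ≤ e + 1 + (N + 1 + 1))
    (hred : arrangementCone (I.erase i) ℓ ⊆ arrangementCone I ℓ) :
    adjointSpace K I ℓ (arrangementCone I ℓ) (e + 1) ≤
      (adjointSpace K (I.erase i) ℓ (arrangementCone (I.erase i) ℓ) e).map
        (LinearMap.mulLeft K (linearForm K (ℓ i))) := by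
  intro f hf
  obtain ⟨g, rfl⟩ := linearForm_dvd_of_mem_adjointSpace_of_redundant hI hi hℓ hcard hred hf
  rw [hred.antisymm (arrangementCone_antitone (erase_subset i I))]
  exact ⟨g, mem_adjointSpace_erase_of_linearForm_mul_mem hi hℓ hf, rfl⟩

end Rank

/-- Induction on the number of hyperplanes: a redundant hyperplane can be deleted, because all forms
in question are divisible by its equation; restriction to an irredundant one is injective. -/
theorem rank_adjointSpace_le_one {N : ℕ} {ℓ : ι → Module.Dual 𝕜 (Fin (N + 1) → 𝕜)}
    (hI : IsEssential I ℓ) (hℓ : ∀ i ∈ I, ℓ i ≠ 0) (hcard : #I ≤ e + (N + 1)) :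
    Module.rank K (adjointSpace K I ℓ (arrangementCone I ℓ) e) ≤ 1 := by
  induction I using Finset.strongInduction generalizing N e with
  | H I ih =>
  obtain _ | M := N
  · have : Unique (Fin (0 + 1)) := inferInstanceAs (Unique (Fin 1))
    exact (Submodule.rank_mono inf_le_left).trans (rank_homogeneousSubmodule_le_one e)
  obtain ⟨i, hi⟩ := hI.nonempty
  by_cases hred : arrangementCone (I.erase i) ℓ ⊆ arrangementCone I ℓ
  · by_cases hbot : adjointSpace K I ℓ (arrangementCone I ℓ) e = ⊥
    · rw [hbot, rank_bot]
      exact zero_le_one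
    obtain ⟨f, hf, hf0⟩ := Submodule.exists_mem_ne_zero_of_ne_bot hbot
    obtain ⟨hIi, e', rfl, -⟩ := hI.exists_eq_linearForm_mul hi (hℓ i hi) hf hf0
      (linearForm_dvd_of_mem_adjointSpace_of_redundant hI hi (hℓ i hi) hcard hred hf)
    calc Module.rank K (adjointSpace K I ℓ (arrangementCone I ℓ) (e' + 1))
        ≤ Module.rank K (adjointSpace K (I.erase i) ℓ (arrangementCone (I.erase i) ℓ) e') :=
          (Submodule.rank_mono (adjointSpace_le_map_mulLeft_of_redundant hI hi (hℓ i hi) hcard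
            hred)).trans (rank_map_le _ _)
      _ ≤ 1 := ih _ (erase_ssubset hi) hIi (fun j hj => hℓ j (mem_of_mem_erase hj))
          (by rw [card_erase_of_mem hi]; omega)
  · obtain ⟨A, hA, hexact⟩ := exists_hyperplane_parametrization (hℓ i hi)
    have hsub := restrictedIndices_subset_erase I hexact.linearMap_comp_eq_zero
    have hsub_card := (card_le_card hsub).trans_eq (card_erase_of_mem hi)
    exact (rank_adjointSpace_le_rank_restrict_of_irredundant hI hℓ hi hA hexact hcard hred).trans
      (ih _ (hsub.trans_ssubset (erase_ssubset hi)) (hI.restrict hA)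
        (fun j hj => (mem_filter.1 hj).2) (by omega))

end Uniqueness

section Existence

theorem sum_mem_of_existsUnique_partner {R α : Type*} [CommRing R] {I : Ideal R} {s : Finset α}
    {f : α → R} {r : α → α → Prop} (hsymm : ∀ ⦃a b⦄, r a b → r b a) (hirrefl : ∀ a, ¬ r a a)
    (hpartner : ∀ a ∈ s, ∃! b, b ∈ s ∧ r a b)
    (hpair : ∀ a ∈ s, ∀ b, r a b → f a + f b ∈ I) : ∑ a ∈ s, f a ∈ I := by
  choose g hg huniq using hpartner
  rw [← Ideal.Quotient.eq_zero_iff_mem, map_sum]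
  refine sum_involution g (fun a ha => ?_) (fun a ha _ hfix => hirrefl a ?_)
    (fun a ha => (hg a ha).1) fun a ha => (huniq _ _ a ⟨ha, hsymm (hg a ha).2⟩).symm
  · rw [← map_add, Ideal.Quotient.eq_zero_iff_mem]
    exact hpair a ha _ (hg a ha).2
  · have hr := (hg a ha).2
    rwa [hfix] at hr

variable {𝕜 K ι σ : Type*} [Field 𝕜]

theorem IsEssential.span_eq_top {E : Type*} [AddCommGroup E] [Module 𝕜 E] [FiniteDimensional 𝕜 E]
    {I : Finset ι} {ℓ : ι → Module.Dual 𝕜 E} (hI : IsEssential I ℓ) :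
    Submodule.span 𝕜 (Set.range fun i : I => ℓ i) = ⊤ := by
  have hbot : (Submodule.span 𝕜 (Set.range fun i : I => ℓ i)).dualCoannihilator = ⊥ :=
    eq_bot_iff.2 fun v hv => hI v fun i hi =>
      (Submodule.mem_dualCoannihilator _).1 hv _ (Submodule.subset_span ⟨⟨i, hi⟩, rfl⟩)
  have hfinrank := Subspace.finrank_add_finrank_dualCoannihilator_eq
    (Submodule.span 𝕜 (Set.range fun i : I => ℓ i))
  rw [hbot, finrank_bot, add_zero, ← Subspace.dual_finrank_eq] at hfinrank
  exact Submodule.eq_top_of_finrank_eq hfinrank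

variable [Fintype σ] {φ : ι → Module.Dual 𝕜 (σ → 𝕜)} {b b' : σ → ι} {v : σ → 𝕜}

section Tuples

/-- The coefficient matrix of the functionals selected by the tuple `b`. -/
def tupleMatrix (φ : ι → Module.Dual 𝕜 (σ → 𝕜)) (b : σ → ι) : Matrix σ σ 𝕜 :=
  Matrix.of fun r j => φ (b r) (Pi.single j 1)

theorem tupleMatrix_mulVec (φ : ι → Module.Dual 𝕜 (σ → 𝕜)) (b : σ → ι) (v : σ → 𝕜) :
    (tupleMatrix φ b).mulVec v = fun r => φ (b r) v :=
  funext fun r => (dual_apply_eq_sum (φ (b r)) v).symm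

theorem eq_of_forall_tuple_apply_eq (hb : (tupleMatrix φ b).det ≠ 0) {u w : σ → 𝕜}
    (h : ∀ r, φ (b r) u = φ (b r) w) : u = w := by
  refine sub_eq_zero.1 (Matrix.eq_zero_of_mulVec_eq_zero hb ?_)
  rw [tupleMatrix_mulVec]
  exact funext fun r => by rw [map_sub, h, sub_self, Pi.zero_apply]

theorem injective_of_det_tupleMatrix_ne_zero (hb : (tupleMatrix φ b).det ≠ 0) :
    Function.Injective b := by
  intro r s hrs
  by_contra hne
  exact hb (Matrix.det_zero_of_row_eq hne (funext fun j => by simp [tupleMatrix, hrs]))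

theorem IsEssential.exists_tuple {I : Finset ι} (hI : IsEssential I φ) :
    ∃ b : σ → ι, (∀ r, b r ∈ I) ∧ (tupleMatrix φ b).det ≠ 0 := by
  obtain ⟨κ, a, ha, hspan, hindep⟩ := exists_linearIndependent' 𝕜 fun i : I => φ i
  rw [hI.span_eq_top] at hspan
  have := Fintype.ofInjective a ha
  have hcard : Fintype.card σ = Fintype.card κ := by
    rw [← Module.finrank_eq_card_basis (Module.Basis.mk hindep hspan.ge), Subspace.dual_finrank_eq,
      Module.finrank_fintype_fun_eq_card]
  let c := Fintype.equivOfCardEq hcard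
  refine ⟨fun r => a (c r), fun r => (a (c r)).2, fun hdet => ?_⟩
  obtain ⟨v, hv0, hv⟩ := Matrix.exists_mulVec_eq_zero_iff.2 hdet
  rw [tupleMatrix_mulVec] at hv
  have htop : (⊤ : Submodule 𝕜 (Module.Dual 𝕜 (σ → 𝕜))) ≤
      LinearMap.ker (Module.Dual.eval 𝕜 (σ → 𝕜) v) := by
    rw [← hspan, Submodule.span_le]
    rintro _ ⟨k, rfl⟩
    simpa using congrFun hv (c.symm k)
  exact hv0 (hI v fun i _ => htop (Submodule.mem_top (x := φ i)))

theorem exists_tuple_apply_ne_zero (hb : (tupleMatrix φ b).det ≠ 0) (hv : v ≠ 0) :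
    ∃ r, φ (b r) v ≠ 0 := by
  by_contra! hzero
  exact hv (eq_of_forall_tuple_apply_eq hb fun r => by rw [hzero r, map_zero])

/-- Both tuples give the same `p`-th column of the adjugate matrix, and by Cramer's rule this column
is `det / φ (b p) v` times `v`. -/
theorem apply_mul_det_tupleMatrix_eq {p : σ} (hv : v ≠ 0)
    (hb : ∀ r ≠ p, φ (b r) v = 0 ∧ b' r = b r) :
    φ (b' p) v * (tupleMatrix φ b).det = φ (b p) v * (tupleMatrix φ b').det := by
  have hcramer : ∀ a : σ → ι, (∀ r ≠ p, φ (a r) v = 0) → ∀ j,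
      (tupleMatrix φ a).det * v j = φ (a p) v * (tupleMatrix φ a).adjugate j p := by
    intro a ha j
    have hmul : (tupleMatrix φ a).mulVec v = Pi.single p (φ (a p) v) := by
      rw [tupleMatrix_mulVec]
      refine funext fun r => ?_
      obtain rfl | hr := eq_or_ne r p
      · simp
      · simp [ha r hr, hr]
    have hadj := congrFun (congrArg (tupleMatrix φ a).adjugate.mulVec hmul) j
    rw [Matrix.mulVec_mulVec, Matrix.adjugate_mul, Matrix.smul_mulVec, Matrix.one_mulVec,
      Matrix.mulVec_single] at hadj
    simpa [mul_comm] using hadj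
  have hadj : ∀ j, (tupleMatrix φ b').adjugate j p = (tupleMatrix φ b).adjugate j p := by
    intro j
    rw [Matrix.adjugate_apply, Matrix.adjugate_apply]
    congr 1
    refine Matrix.ext fun r s => ?_
    obtain rfl | hr := eq_or_ne r p
    · simp
    · simp [Matrix.updateRow_ne hr, tupleMatrix, (hb r hr).2]
  obtain ⟨j, hj⟩ := Function.ne_iff.1 hv
  refine mul_right_cancel₀ hj ?_
  rw [mul_assoc, mul_assoc, hcramer b (fun r hr => (hb r hr).1) j,
    hcramer b' (fun r hr => (hb r hr).2 ▸ (hb r hr).1) j, hadj j]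
  ring

end Tuples

section Genericity

/-- The heights `h` are in general position: `dim` hyperplanes `φ i = h i` with linearly independent
equations meet in a point lying on no further hyperplane of the family. -/
def IsGenericHeight (φ : ι → Module.Dual 𝕜 (σ → 𝕜)) (h : ι → 𝕜) : Prop :=
  ∀ b : σ → ι, (tupleMatrix φ b).det ≠ 0 → ∀ u, (∀ r, φ (b r) u = h (b r)) →
    ∀ j, φ j u = h j → j ∈ Set.range b

theorem exists_isGenericHeight [Infinite 𝕜] [Finite ι] (φ : ι → Module.Dual 𝕜 (σ → 𝕜)) :
    ∃ h, IsGenericHeight φ h := by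
  let slack (x : {x : (σ → ι) × ι // x.2 ∉ Set.range x.1}) : Module.Dual 𝕜 (ι → 𝕜) :=
    LinearMap.proj x.1.2 -
      φ x.1.2 ∘ₗ (tupleMatrix φ x.1.1)⁻¹.mulVecLin ∘ₗ LinearMap.funLeft 𝕜 𝕜 x.1.1
  obtain ⟨h, hh⟩ := Module.Dual.exists_forall_ne_zero_of_forall_exists slack fun x => by
    have hsingle : LinearMap.funLeft 𝕜 𝕜 x.1.1 (Pi.single x.1.2 1) = 0 :=
      funext fun r => Pi.single_eq_of_ne (fun hr => x.2 ⟨r, hr⟩) 1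
    exact ⟨Pi.single x.1.2 1, by simp [slack, hsingle]⟩
  refine ⟨h, fun b hb u hu j hj => by_contra fun hjb => hh ⟨(b, j), hjb⟩ ?_⟩
  have hmul : (tupleMatrix φ b).mulVec u = LinearMap.funLeft 𝕜 𝕜 b h :=
    (tupleMatrix_mulVec φ b u).trans (funext hu)
  have hinv : (tupleMatrix φ b)⁻¹.mulVec (LinearMap.funLeft 𝕜 𝕜 b h) = u := by
    rw [← hmul, Matrix.mulVec_mulVec, Matrix.nonsing_inv_mul _ (isUnit_iff_ne_zero.2 hb),
      Matrix.one_mulVec]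
  simp [slack, hinv, hj]

end Genericity

section Counting

theorem one_le_nonzeroCount_tuple (hb : (tupleMatrix φ b).det ≠ 0) (hv : v ≠ 0) :
    1 ≤ nonzeroCount univ (φ ∘ b) v := by
  obtain ⟨r, hr⟩ := exists_tuple_apply_ne_zero hb hv
  exact card_pos.2 ⟨r, mem_filter.2 ⟨mem_univ r, hr⟩⟩

theorem nonzeroCount_tuple_eq_one_iff :
    nonzeroCount univ (φ ∘ b) v = 1 ↔ ∃ p, (∀ r ≠ p, φ (b r) v = 0) ∧ φ (b p) v ≠ 0 := by
  rw [nonzeroCount, card_eq_one]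
  simp only [Finset.ext_iff, mem_filter_univ, mem_singleton, Function.comp_apply]
  refine exists_congr fun p => ⟨fun h => ⟨fun r hr => by_contra fun hr0 => hr ((h r).1 hr0),
    (h p).2 rfl⟩, fun h r => ⟨fun hr => by_contra fun hrp => hr (h.1 r hrp), ?_⟩⟩
  rintro rfl
  exact h.2

theorem notMem_image_of_apply_ne_zero {p : σ} {i : ι} (hb : ∀ r ≠ p, φ (b r) v = 0)
    (hi : φ i v ≠ 0) (hip : i ≠ b p) : i ∉ univ.image b := by
  intro hmem
  obtain ⟨r, -, rfl⟩ := mem_image.1 hmem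
  exact hi (hb r fun hr => hip (congrArg b hr))

theorem insert_image_eq_of_eqOn {p : σ} (h : ∀ r ≠ p, b' r = b r) :
    insert (b p) (univ.image b') = insert (b' p) (univ.image b) := by
  refine Finset.ext fun i => ?_
  simp only [mem_insert, mem_image, mem_univ, true_and]
  grind

theorem card_compl_image_filter_add_nonzeroCount [Fintype ι] {e : ℕ} (hb : Function.Injective b)
    (hcard : Fintype.card ι = e + Fintype.card σ) :
    #{i ∈ (univ.image b)ᶜ | φ i v = 0} + nonzeroCount univ φ v =
      e + nonzeroCount univ (φ ∘ b) v := by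
  have himage : nonzeroCount (univ.image b) φ v = nonzeroCount univ (φ ∘ b) v := by
    rw [nonzeroCount, filter_image, card_image_of_injective _ hb]
    rfl
  have hcompl : #(univ.image b)ᶜ = e := by
    rw [card_compl, card_image_of_injective _ hb, card_univ, hcard, Nat.add_sub_cancel]
  have hsplit : nonzeroCount (univ.image b) φ v + nonzeroCount (univ.image b)ᶜ φ v =
      nonzeroCount univ φ v := by
    rw [nonzeroCount, nonzeroCount, nonzeroCount,
      ← card_union_of_disjoint (disjoint_filter_filter disjoint_compl_right), ← filter_union,
      union_compl]
  have hsplit' : #{i ∈ (univ.image b)ᶜ | φ i v = 0} + nonzeroCount (univ.image b)ᶜ φ v = e :=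
    (card_filter_add_card_filter_not _).trans hcompl
  omega

variable [Field K] [Algebra 𝕜 K]

theorem linearForm_mem_pointIdeal {ψ : Module.Dual 𝕜 (σ → 𝕜)} (hψ : ψ v = 0) :
    linearForm K ψ ∈ pointIdeal (algebraMap 𝕜 K ∘ v) :=
  Ideal.subset_span ⟨isHomogeneous_linearForm ψ, by rw [eval_linearForm, hψ, map_zero]⟩

theorem prod_linearForm_mem_pointIdeal_pow (s : Finset ι) :
    ∏ i ∈ s, linearForm K (φ i) ∈
      pointIdeal (algebraMap 𝕜 K ∘ v) ^ #{i ∈ s | φ i v = 0} := by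
  rw [← prod_filter_mul_prod_filter_not s (fun i => φ i v = 0), ← prod_const]
  exact Ideal.mul_mem_right _ _
    (Ideal.prod_mem_prod fun i hi => linearForm_mem_pointIdeal (mem_filter.1 hi).2)

end Counting

variable [LinearOrder 𝕜] {h : ι → 𝕜}

section SimplexTerms

/-- The tuple `b` spans a maximal simplex of the regular subdivision with heights `h`: the
functionals `φ (b r)` are linearly independent, and the point where they take the values `h (b r)`
is a vertex of the polyhedron `{u | ∀ j, φ j u ≤ h j}`. -/
def IsSimplex (φ : ι → Module.Dual 𝕜 (σ → 𝕜)) (h : ι → 𝕜) (b : σ → ι) : Prop :=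
  (tupleMatrix φ b).det ≠ 0 ∧ ∃ u, (∀ r, φ (b r) u = h (b r)) ∧ ∀ j, φ j u ≤ h j

/-- `b` and `b'` differ in one entry only, the hyperplanes of their common entries pass through `v`,
and those of the two exchanged entries have `v` on opposite sides. Two neighbouring simplices have a
common facet, whose span is a hyperplane of linear forms vanishing at `v`. -/
def IsNeighbour {σ : Type*} (φ : ι → Module.Dual 𝕜 (σ → 𝕜)) (v : σ → 𝕜) (b b' : σ → ι) : Prop :=
  ∃ p, (∀ r ≠ p, φ (b r) v = 0 ∧ b' r = b r) ∧ φ (b p) v * φ (b' p) v < 0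

theorem IsNeighbour.symm {σ : Type*} {φ : ι → Module.Dual 𝕜 (σ → 𝕜)} {v : σ → 𝕜} {b b' : σ → ι}
    (hbb' : IsNeighbour φ v b b') : IsNeighbour φ v b' b := by
  obtain ⟨p, hb, hneg⟩ := hbb'
  exact ⟨p, fun r hr => ⟨(hb r hr).2 ▸ (hb r hr).1, (hb r hr).2.symm⟩,
    mul_comm (φ (b p) v) _ ▸ hneg⟩

theorem not_isNeighbour_self {σ : Type*} [IsStrictOrderedRing 𝕜] (φ : ι → Module.Dual 𝕜 (σ → 𝕜))
    (v : σ → 𝕜) (b : σ → ι) : ¬ IsNeighbour φ v b b :=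
  fun ⟨_, _, hneg⟩ => (mul_self_nonneg _).not_gt hneg

theorem IsNeighbour.nonzeroCount_eq_one (hbb' : IsNeighbour φ v b b') :
    nonzeroCount univ (φ ∘ b) v = 1 := by
  obtain ⟨p, hb, hneg⟩ := hbb'
  exact nonzeroCount_tuple_eq_one_iff.2 ⟨p, fun r hr => (hb r hr).1, left_ne_zero_of_mul hneg.ne⟩

variable [Fintype ι] [Field K] [Algebra 𝕜 K]

variable (K) in
/-- The contribution of the simplex spanned by the tuple `b` to the adjoint polynomial. -/
def simplexTerm (φ : ι → Module.Dual 𝕜 (σ → 𝕜)) (b : σ → ι) : MvPolynomial σ K :=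
  |(tupleMatrix φ b).det| • ∏ i ∈ (univ.image b)ᶜ, linearForm K (φ i)

variable (K) in
/-- Warren's adjoint polynomial, computed from the regular triangulation with heights `h`. The sum
is over ordered simplices, so each simplex is counted `(card σ)!` times. -/
def adjointPolynomial (φ : ι → Module.Dual 𝕜 (σ → 𝕜)) (h : ι → 𝕜) : MvPolynomial σ K :=
  ∑ b with IsSimplex φ h b, simplexTerm K φ b

theorem isHomogeneous_adjointPolynomial {e : ℕ} (h : ι → 𝕜)
    (hcard : Fintype.card ι = e + Fintype.card σ) : (adjointPolynomial K φ h).IsHomogeneous e := by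
  refine IsHomogeneous.sum _ _ _ fun b hb => ?_
  have hinj := injective_of_det_tupleMatrix_ne_zero (mem_filter.1 hb).2.1
  have hprod := IsHomogeneous.prod (univ.image b)ᶜ (fun i => linearForm K (φ i)) (fun _ => 1)
    fun i _ => isHomogeneous_linearForm (φ i)
  rw [sum_const, card_compl, card_image_of_injective _ hinj, card_univ, hcard, Nat.add_sub_cancel,
    smul_eq_mul, mul_one] at hprod
  rw [simplexTerm, algebra_compatible_smul K]
  exact (homogeneousSubmodule σ K e).smul_mem _ hprod

theorem simplexTerm_mem_pointIdeal_pow {e c : ℕ} (hb : (tupleMatrix φ b).det ≠ 0)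
    (hcard : Fintype.card ι = e + Fintype.card σ) (hc : c ≤ nonzeroCount univ (φ ∘ b) v) :
    simplexTerm K φ b ∈
      pointIdeal (algebraMap 𝕜 K ∘ v) ^ (e + c - nonzeroCount univ φ v) := by
  rw [simplexTerm, algebra_compatible_smul K]
  refine Submodule.smul_of_tower_mem _ _ (Ideal.pow_le_pow_right ?_
    (prod_linearForm_mem_pointIdeal_pow (v := v) (univ.image b)ᶜ))
  have := card_compl_image_filter_add_nonzeroCount (φ := φ) (v := v)
    (injective_of_det_tupleMatrix_ne_zero hb) hcard
  omega

end SimplexTerms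

variable [IsStrictOrderedRing 𝕜]

section Simplices

variable [Fintype ι]

theorem IsEssential.exists_vertex {E : Type*} [AddCommGroup E] [Module 𝕜 E]
    {ℓ : ι → Module.Dual 𝕜 E} (hℓ : IsEssential univ ℓ) {u₀ : E} (hu₀ : ∀ j, ℓ j u₀ ≤ h j) :
    ∃ u, (∀ j, ℓ j u ≤ h j) ∧ IsEssential {j | ℓ j u = h j} ℓ := by
  let tight (u : E) : Finset ι := {j | ℓ j u = h j}
  obtain ⟨_, ⟨⟨u, hu, rfl⟩, hmax⟩⟩ :=
    (Set.toFinite (tight '' {u | ∀ j, ℓ j u ≤ h j})).exists_maximal ⟨_, u₀, hu₀, rfl⟩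
  refine ⟨u, hu, fun w hw => by_contra fun hw0 => ?_⟩
  obtain ⟨c, k, hk⟩ : ∃ c : 𝕜, ∃ k, 0 < ℓ k (c • w) := by
    by_contra! hle
    refine hw0 (hℓ w fun k _ => le_antisymm (by simpa using hle 1 k) ?_)
    simpa using hle (-1) k
  obtain ⟨t, -, hcone, j, -, hjw, hj⟩ :=
    exists_wall_of_pos (I := univ) (fun j _ => hu j) ⟨k, mem_univ k, hk⟩
  have hsub : tight u ⊆ tight (u + t • c • w) := fun i hi =>
    mem_filter.2 ⟨mem_univ i, by simp [hw i hi, (mem_filter.1 hi).2]⟩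
  have hj' := hmax ⟨_, fun i => hcone i (mem_univ i), rfl⟩ hsub (mem_filter.2 ⟨mem_univ j, hj⟩)
  simp [hw j hj'] at hjw

theorem IsEssential.exists_isSimplex (hφ : IsEssential univ φ) {x : σ → 𝕜}
    (hx : ∀ i, 0 < φ i x) (h : ι → 𝕜) : ∃ b, IsSimplex φ h b := by
  obtain ⟨M, hM⟩ := (univ.image fun j => -h j / φ j x).bddAbove
  have hfeasible : ∀ j, φ j (-M • x) ≤ h j := by
    intro j
    have hle := hM (mem_coe.2 (mem_image_of_mem _ (mem_univ j)))
    rw [div_le_iff₀ (hx j)] at hle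
    rw [map_smul, smul_eq_mul]
    linarith
  obtain ⟨u, hu, hess⟩ := hφ.exists_vertex hfeasible
  obtain ⟨b, hbtight, hb⟩ := hess.exists_tuple
  exact ⟨b, hb, u, fun r => (mem_filter.1 (hbtight r)).2, hu⟩

end Simplices

section Neighbours

theorem abs_det_mul_apply_add_eq_zero (hv : v ≠ 0) {p : σ}
    (hb : ∀ r ≠ p, φ (b r) v = 0 ∧ b' r = b r) (hneg : φ (b p) v * φ (b' p) v < 0) :
    |(tupleMatrix φ b).det| * φ (b' p) v + |(tupleMatrix φ b').det| * φ (b p) v = 0 := by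
  have habs := congrArg abs (apply_mul_det_tupleMatrix_eq hv hb)
  rw [abs_mul, abs_mul] at habs
  rcases mul_neg_iff.1 hneg with ⟨hp, hp'⟩ | ⟨hp, hp'⟩
  · rw [abs_of_neg hp', abs_of_pos hp] at habs
    linarith
  · rw [abs_of_pos hp', abs_of_neg hp] at habs
    linarith

theorem IsSimplex.exists_isNeighbour [Finite ι] (hb : IsSimplex φ h b)
    (hcard : nonzeroCount univ (φ ∘ b) v = 1) (hpos : ∃ i, 0 < φ i v) (hneg : ∃ i, φ i v < 0) :
    ∃ b', IsSimplex φ h b' ∧ IsNeighbour φ v b b' := by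
  cases nonempty_fintype ι
  obtain ⟨hdet, u, hu, hfeasible⟩ := hb
  obtain ⟨p, hoff, hpv⟩ := nonzeroCount_tuple_eq_one_iff.1 hcard
  obtain ⟨k, hk⟩ : ∃ k, φ (b p) v * φ k v < 0 := by
    rcases hpv.lt_or_gt with hlt | hgt
    · exact hpos.imp fun i hi => mul_neg_of_neg_of_pos hlt hi
    · exact hneg.imp fun i hi => mul_neg_of_pos_of_neg hgt hi
  obtain ⟨t, -, hfeasible', m, -, hm, hmu⟩ := exists_wall_of_pos (I := univ)
    (w := -φ (b p) v • v) (fun j _ => hfeasible j) ⟨k, mem_univ k, by simpa using hk⟩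
  have hmv : φ (b p) v * φ m v < 0 := by simpa using hm
  have hupdate : ∀ r ≠ p, φ (b r) v = 0 ∧ Function.update b p m r = b r :=
    fun r hr => ⟨hoff r hr, Function.update_of_ne hr m b⟩
  refine ⟨Function.update b p m,
    ⟨fun hdet' => ?_, _, fun r => ?_, fun j => hfeasible' j (mem_univ j)⟩,
    p, hupdate, by rwa [Function.update_self]⟩
  · have hv : v ≠ 0 := fun hv => hpv (by rw [hv, map_zero])
    have heq := apply_mul_det_tupleMatrix_eq hv hupdate
    rw [hdet', mul_zero, Function.update_self] at heq
    exact mul_ne_zero (right_ne_zero_of_mul hmv.ne) hdet heq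
  · obtain rfl | hr := eq_or_ne r p
    · rw [Function.update_self, hmu]
    · simp [Function.update_of_ne hr, hoff r hr, hu r]

theorem IsSimplex.eq_of_isNeighbour {b'' : σ → ι} (hgen : IsGenericHeight φ h)
    (hb : (tupleMatrix φ b).det ≠ 0) (hb' : IsSimplex φ h b') (hb'' : IsSimplex φ h b'')
    (hbb' : IsNeighbour φ v b b') (hbb'' : IsNeighbour φ v b b'') : b' = b'' := by
  obtain ⟨p, hoff, hneg⟩ := hbb'
  obtain ⟨q, hoff', hneg'⟩ := hbb''
  obtain rfl : q = p := by_contra fun hqp => left_ne_zero_of_mul hneg'.ne (hoff q hqp).1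
  obtain ⟨hdet', u, hu, hfeasible⟩ := hb'
  obtain ⟨-, w, hw, hfeasible'⟩ := hb''
  have hqv : φ (b q) v ≠ 0 := left_ne_zero_of_mul hneg.ne
  obtain ⟨c, rfl⟩ : ∃ c : 𝕜, w = u + c • v := by
    refine ⟨φ (b q) (w - u) / φ (b q) v, ?_⟩
    refine eq_of_forall_tuple_apply_eq hb fun r => ?_
    obtain rfl | hr := eq_or_ne r q
    · simp [hqv]
    · rw [← (hoff' r hr).2, hw, (hoff' r hr).2, ← (hoff r hr).2, ← hu, (hoff r hr).2, map_add,
        map_smul, (hoff r hr).1, smul_zero, add_zero]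
  have hle := hfeasible' (b' q)
  have hle' := hfeasible (b'' q)
  rw [← hu, map_add, map_smul, smul_eq_mul] at hle
  rw [← hw, map_add, map_smul, smul_eq_mul] at hle'
  have hc0 : c = 0 := by
    have hsame : 0 < φ (b' q) v * φ (b'' q) v :=
      pos_of_mul_pos_right (by linear_combination mul_pos_of_neg_of_neg hneg hneg')
        (sq_nonneg (φ (b q) v))
    have hopposite : c * φ (b' q) v * (c * φ (b'' q) v) ≤ 0 :=
      mul_nonpos_of_nonpos_of_nonneg (by linarith) (by linarith)
    by_contra hc0
    linarith [mul_pos (sq_pos_of_ne_zero hc0) hsame]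
  obtain ⟨r, hr⟩ := hgen b' hdet' u hu (b'' q) (by simpa [hc0] using hw q)
  obtain rfl : r = q := by_contra fun hrq => right_ne_zero_of_mul hneg'.ne
    (by rw [← hr, (hoff r hrq).2, (hoff r hrq).1])
  refine funext fun s => ?_
  obtain rfl | hs := eq_or_ne s r
  exacts [hr, (hoff s hs).2.trans (hoff' s hs).2.symm]

end Neighbours

section AdjointPolynomial

variable [Fintype ι] [Field K] [Algebra 𝕜 K] {e : ℕ}

theorem adjointPolynomial_ne_zero {x : σ → 𝕜} (hx : ∀ i, 0 < φ i x)
    (hsimplex : ∃ b, IsSimplex φ h b) : adjointPolynomial K φ h ≠ 0 := by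
  obtain ⟨b₀, hb₀⟩ := hsimplex
  have hpos : 0 < ∑ b with IsSimplex φ h b,
      |(tupleMatrix φ b).det| * ∏ i ∈ (univ.image b)ᶜ, φ i x :=
    sum_pos (fun b hb => mul_pos (abs_pos.2 (mem_filter.1 hb).2.1) (prod_pos fun i _ => hx i))
      ⟨b₀, mem_filter.2 ⟨mem_univ _, hb₀⟩⟩
  have heval : eval (algebraMap 𝕜 K ∘ x) (adjointPolynomial K φ h) =
      algebraMap 𝕜 K (∑ b with IsSimplex φ h b,
        |(tupleMatrix φ b).det| * ∏ i ∈ (univ.image b)ᶜ, φ i x) := by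
    simp only [adjointPolynomial, simplexTerm, map_sum, Algebra.smul_def,
      MvPolynomial.algebraMap_apply, eval_C, map_mul, map_prod, eval_linearForm]
  intro hzero
  rw [hzero, map_zero, eq_comm, map_eq_zero] at heval
  exact hpos.ne' heval

theorem IsNeighbour.exists_compl_image_eq_insert (hv : v ≠ 0) (hbb' : IsNeighbour φ v b b') :
    ∃ i j s, i ∉ s ∧ j ∉ s ∧ (univ.image b)ᶜ = insert i s ∧ (univ.image b')ᶜ = insert j s ∧
      φ i v ≠ 0 ∧ (|(tupleMatrix φ b).det| • φ i + |(tupleMatrix φ b').det| • φ j) v = 0 := by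
  obtain ⟨p, hoff, hneg⟩ := hbb'
  have hp : φ (b p) v ≠ 0 := left_ne_zero_of_mul hneg.ne
  have hp' : φ (b' p) v ≠ 0 := right_ne_zero_of_mul hneg.ne
  have hne : b' p ≠ b p := fun heq => (mul_self_nonneg _).not_gt (heq ▸ hneg)
  have hmem : b' p ∉ univ.image b :=
    notMem_image_of_apply_ne_zero (fun r hr => (hoff r hr).1) hp' hne
  have hmem' : b p ∉ univ.image b' :=
    notMem_image_of_apply_ne_zero (fun r hr => (hoff r hr).2 ▸ (hoff r hr).1) hp hne.symm
  have hinsert := insert_image_eq_of_eqOn fun r hr => (hoff r hr).2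
  refine ⟨b' p, b p, (insert (b' p) (univ.image b))ᶜ, by simp, ?_, (insert_compl_insert hmem).symm,
    ?_, hp', abs_det_mul_apply_add_eq_zero hv hoff hneg⟩
  · simp [← hinsert]
  · rw [← hinsert, insert_compl_insert hmem']

/-- The terms of two neighbours share all factors but one, and the remaining factors combine to a
linear form vanishing at `v`. -/
theorem IsNeighbour.simplexTerm_add_mem (hb : (tupleMatrix φ b).det ≠ 0) (hv : v ≠ 0)
    (hcard : Fintype.card ι = e + Fintype.card σ) (hbb' : IsNeighbour φ v b b') :
    simplexTerm K φ b + simplexTerm K φ b' ∈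
      pointIdeal (algebraMap 𝕜 K ∘ v) ^ (e + 2 - nonzeroCount univ φ v) := by
  have hridge := hbb'.nonzeroCount_eq_one
  have hcount := card_compl_image_filter_add_nonzeroCount (φ := φ) (v := v)
    (injective_of_det_tupleMatrix_ne_zero hb) hcard
  obtain ⟨i, j, s, his, hjs, hcompl, hcompl', hiv, hzero⟩ := hbb'.exists_compl_image_eq_insert hv
  rw [hcompl, filter_insert, if_neg hiv] at hcount
  have hsum : simplexTerm K φ b + simplexTerm K φ b' =
      linearForm K (|(tupleMatrix φ b).det| • φ i + |(tupleMatrix φ b').det| • φ j) *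
        ∏ k ∈ s, linearForm K (φ k) := by
    rw [simplexTerm, simplexTerm, hcompl, hcompl', prod_insert his, prod_insert hjs, map_add,
      map_smul, map_smul, add_mul, smul_mul_assoc, smul_mul_assoc]
  have hmem := Ideal.mul_mem_mul (linearForm_mem_pointIdeal (K := K) hzero)
    (prod_linearForm_mem_pointIdeal_pow (K := K) (φ := φ) (v := v) s)
  rw [hsum]
  rw [← pow_succ'] at hmem
  exact Ideal.pow_le_pow_right (by omega) hmem

theorem adjointPolynomial_mem_pointIdeal_pow (hgen : IsGenericHeight φ h) (hv : v ≠ 0)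
    (hcard : Fintype.card ι = e + Fintype.card σ) :
    adjointPolynomial K φ h ∈ pointIdeal (algebraMap 𝕜 K ∘ v) ^
      adjointOrder univ φ (arrangementCone univ φ) e v := by
  rw [adjointOrder]
  split_ifs with hcone
  · exact Ideal.sum_mem _ fun b hb =>
      simplexTerm_mem_pointIdeal_pow (mem_filter.1 hb).2.1 hcard
        (one_le_nonzeroCount_tuple (mem_filter.1 hb).2.1 hv)
  have hpos : ∃ i, 0 < φ i v := by
    by_contra! hle
    exact hcone (Or.inr fun i _ => by simpa using hle i)
  have hneg : ∃ i, φ i v < 0 := by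
    by_contra! hge
    exact hcone (Or.inl fun i _ => hge i)
  rw [adjointPolynomial, ← sum_filter_add_sum_filter_not _ fun b => nonzeroCount univ (φ ∘ b) v = 1]
  refine Ideal.add_mem _ (sum_mem_of_existsUnique_partner (r := IsNeighbour φ v)
    (fun _ _ hbb' => hbb'.symm) (not_isNeighbour_self φ v) (fun b hb => ?_) fun b hb b' hbb' => ?_)
    (Ideal.sum_mem _ fun b hb => ?_)
  · simp only [mem_filter, mem_univ, true_and] at hb ⊢
    obtain ⟨b', hb', hbb'⟩ := hb.1.exists_isNeighbour hb.2 hpos hneg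
    exact ⟨b', ⟨⟨hb', hbb'.symm.nonzeroCount_eq_one⟩, hbb'⟩, fun b'' hb'' =>
      IsSimplex.eq_of_isNeighbour hgen hb.1.1 hb''.1.1 hb' hb''.2 hbb'⟩
  · simp only [mem_filter, mem_univ, true_and] at hb
    exact hbb'.simplexTerm_add_mem hb.1.1 hv hcard
  · simp only [mem_filter, mem_univ, true_and] at hb
    have := one_le_nonzeroCount_tuple hb.1.1 hv
    exact simplexTerm_mem_pointIdeal_pow hb.1.1 hcard (by omega)

end AdjointPolynomial

end Existence

section Polytope

variable {n d : ℕ} {φ : Fin d → Module.Dual ℝ (Fin (n + 1) → ℝ)} {v : Fin (n + 1) → ℝ}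

theorem mem_polytopeOf_linearForm {y : Fin n → ℝ} :
    y ∈ polytopeOf (linearForm ℝ ∘ φ) ↔ lift1 y ∈ arrangementCone univ φ := by
  have heval : ∀ i, eval (lift1 y) (linearForm ℝ (φ i)) = φ i (lift1 y) :=
    fun i => eval_linearForm (φ i) (lift1 y)
  simp [polytopeOf, arrangementCone, heval]

theorem mem_flatOf_linearForm {i : Fin d} : i ∈ flatOf (linearForm ℝ ∘ φ) v ↔ φ i v = 0 := by
  have heval : eval v (linearForm ℝ (φ i)) = φ i v := eval_linearForm (φ i) v
  rw [flatOf, mem_filter_univ, Function.comp_apply, heval]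

theorem mem_faceOf_linearForm {y : Fin n → ℝ} :
    y ∈ faceOf (linearForm ℝ ∘ φ) v ↔
      lift1 y ∈ arrangementCone univ φ ∧ ∀ i, φ i v = 0 → φ i (lift1 y) = 0 := by
  have heval : ∀ i, eval (lift1 y) (linearForm ℝ (φ i)) = φ i (lift1 y) :=
    fun i => eval_linearForm (φ i) (lift1 y)
  simp [faceOf, mem_polytopeOf_linearForm, mem_flatOf_linearForm, heval]

theorem card_flatOf_add_nonzeroCount (φ : Fin d → Module.Dual ℝ (Fin (n + 1) → ℝ))
    (v : Fin (n + 1) → ℝ) :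
    #(flatOf (linearForm ℝ ∘ φ) v) + nonzeroCount univ φ v = d := by
  have hflat : flatOf (linearForm ℝ ∘ φ) v = univ.filter fun i => φ i v = 0 :=
    Finset.ext fun i => by rw [mem_flatOf_linearForm, mem_filter_univ]
  rw [hflat, nonzeroCount]
  convert card_filter_add_card_filter_not (s := univ) fun i => φ i v = 0
  exact (card_fin d).symm

theorem rkOf_le_card_flatOf (ℓ : Fin d → MvPolynomial (Fin (n + 1)) ℝ) (v : Fin (n + 1) → ℝ) :
    rkOf ℓ v ≤ #(flatOf ℓ v) := by
  rw [rkOf, ← coe_image]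
  exact (finrank_span_finset_le_card _).trans card_image_le

theorem rkOf_add_finrank_dualCoannihilator (φ : Fin d → Module.Dual ℝ (Fin (n + 1) → ℝ))
    (v : Fin (n + 1) → ℝ) :
    rkOf (linearForm ℝ ∘ φ) v + Module.finrank ℝ
      (Submodule.span ℝ (φ '' flatOf (linearForm ℝ ∘ φ) v)).dualCoannihilator = n + 1 := by
  have hrk : rkOf (linearForm ℝ ∘ φ) v =
      Module.finrank ℝ (Submodule.span ℝ (φ '' flatOf (linearForm ℝ ∘ φ) v)) := by
    rw [rkOf, Set.image_comp, ← Submodule.map_span]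
    exact (Submodule.equivMapOfInjective _ linearForm_injective _).finrank_eq.symm
  rw [hrk, Subspace.finrank_add_finrank_dualCoannihilator_eq, Module.finrank_fin_fun]

theorem rkOf_eq_iff_isArrangementPoint (hv : v ≠ 0) :
    rkOf (linearForm ℝ ∘ φ) v = n ↔ IsArrangementPoint univ φ v := by
  have hmem : ∀ w, w ∈ (Submodule.span ℝ
      (φ '' flatOf (linearForm ℝ ∘ φ) v)).dualCoannihilator ↔ ∀ i, φ i v = 0 → φ i w = 0 := by
    intro w
    rw [← SetLike.mem_coe, Submodule.coe_dualCoannihilator_span]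
    simp [mem_flatOf_linearForm]
  have hrk := rkOf_add_finrank_dualCoannihilator φ v
  rw [show rkOf (linearForm ℝ ∘ φ) v = n ↔ Module.finrank ℝ (Submodule.span ℝ
    (φ '' flatOf (linearForm ℝ ∘ φ) v)).dualCoannihilator = 1 by omega,
    finrank_eq_one_iff_of_nonzero' ⟨v, (hmem v).2 fun _ hi => hi⟩ (by simpa using hv)]
  simp [IsArrangementPoint, hv, hmem, Submodule.mem_span_singleton]

section Cone

theorem span_lift1_image_eq_top {P : Set (Fin n → ℝ)} (hP : affineSpan ℝ P = ⊤) :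
    Submodule.span ℝ (lift1 '' P) = ⊤ := by
  let L : (Fin n → ℝ) →ᵃ[ℝ] (Fin (n + 1) → ℝ) :=
    (Fin.consLinearEquiv ℝ fun _ => ℝ).toLinearMap.toAffineMap.comp
      ((AffineMap.const ℝ (Fin n → ℝ) (1 : ℝ)).prod (AffineMap.id ℝ (Fin n → ℝ)))
  have hlift : ∀ y, lift1 y ∈ Submodule.span ℝ (lift1 '' P) := by
    intro y
    refine affineSpan_subset_span (k := ℝ) ?_
    have hmap : L y ∈ (affineSpan ℝ P).map L := ⟨y, hP ▸ AffineSubspace.mem_top ℝ _ y, rfl⟩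
    rwa [AffineSubspace.map_span] at hmap
  refine eq_top_iff.2 fun v _ => ?_
  have hv : v = lift1 (Fin.tail v) - lift1 0 + v 0 • lift1 0 := by
    refine funext fun k => Fin.cases ?_ (fun j => ?_) k <;> simp [lift1, Fin.tail]
  rw [hv]
  exact add_mem (sub_mem (hlift _) (hlift _)) (Submodule.smul_mem _ _ (hlift _))

theorem exists_mem_polytopeOf_pos (hfull : affineSpan ℝ (polytopeOf (linearForm ℝ ∘ φ)) = ⊤)
    {i : Fin d} (hφ : φ i ≠ 0) : ∃ y ∈ polytopeOf (linearForm ℝ ∘ φ), 0 < φ i (lift1 y) := by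
  obtain ⟨_, ⟨y, hy, rfl⟩, hpos⟩ := exists_pos_of_span_eq_top (span_lift1_image_eq_top hfull) hφ
    (Set.forall_mem_image.2 fun y hy => mem_polytopeOf_linearForm.1 hy i (mem_univ i))
  exact ⟨y, hy, hpos⟩

theorem eq_zero_of_forall_add_smul_mem {E : Type*} [NormedAddCommGroup E] [NormedSpace ℝ E]
    {S : Set E} (hS : Bornology.IsBounded S) {y z : E} (h : ∀ t : ℝ, 0 ≤ t → y + t • z ∈ S) :
    z = 0 := by
  obtain ⟨B, hB⟩ := hS.exists_norm_le
  have hle : ∀ m : ℕ, m • ‖z‖ ≤ B + ‖y‖ := by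
    intro m
    calc m • ‖z‖ = ‖(m : ℝ) • z‖ := by simp [norm_smul]
      _ = ‖(y + (m : ℝ) • z) - y‖ := by rw [add_sub_cancel_left]
      _ ≤ ‖y + (m : ℝ) • z‖ + ‖y‖ := norm_sub_le _ _
      _ ≤ B + ‖y‖ := add_le_add_left (hB _ (h m m.cast_nonneg)) _
  by_contra hz
  obtain ⟨m, hm⟩ := exists_lt_nsmul (norm_pos_iff.2 hz) (B + ‖y‖)
  exact (hle m).not_gt hm

theorem eq_zero_of_mem_arrangementCone_of_apply_zero_eq_zero
    (hcpt : IsCompact (polytopeOf (linearForm ℝ ∘ φ)))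
    (hne : (polytopeOf (linearForm ℝ ∘ φ)).Nonempty) (hv : v ∈ arrangementCone univ φ)
    (hv0 : v 0 = 0) : v = 0 := by
  obtain ⟨y, hy⟩ := hne
  have htail : Fin.tail v = 0 := by
    refine eq_zero_of_forall_add_smul_mem hcpt.isBounded (y := y) fun t ht => ?_
    have hlift : lift1 (y + t • Fin.tail v) = lift1 y + t • v := by
      refine funext fun k => Fin.cases ?_ (fun j => ?_) k <;> simp [lift1, Fin.tail, hv0]
    rw [mem_polytopeOf_linearForm, hlift]
    intro i hi
    rw [map_add, map_smul]
    exact add_nonneg (mem_polytopeOf_linearForm.1 hy i hi) (mul_nonneg ht (hv i hi))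
  exact funext fun k => Fin.cases hv0 (congrFun htail) k

theorem apply_zero_pos_of_mem_arrangementCone [Nonempty (Fin d)] (hφ : ∀ i, φ i ≠ 0)
    (hcpt : IsCompact (polytopeOf (linearForm ℝ ∘ φ)))
    (hfull : affineSpan ℝ (polytopeOf (linearForm ℝ ∘ φ)) = ⊤) (hv : v ∈ arrangementCone univ φ)
    (hv0 : v ≠ 0) : 0 < v 0 := by
  obtain ⟨i⟩ := ‹Nonempty (Fin d)›
  obtain ⟨y, hy, hpos⟩ := exists_mem_polytopeOf_pos hfull (hφ i)
  by_contra! hle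
  have hzero : v - v 0 • lift1 y = 0 := by
    refine eq_zero_of_mem_arrangementCone_of_apply_zero_eq_zero hcpt ⟨y, hy⟩ (fun j hj => ?_)
      (by simp [lift1])
    rw [map_sub, map_smul, smul_eq_mul]
    linarith [hv j hj, mul_nonpos_of_nonpos_of_nonneg hle (mem_polytopeOf_linearForm.1 hy j hj)]
  have hvy : v = v 0 • lift1 y := sub_eq_zero.1 hzero
  have hlt : v 0 < 0 := hle.lt_of_ne fun h0 => hv0 (by rw [hvy, h0, zero_smul])
  have hnonneg := hv i (mem_univ i)
  rw [hvy, map_smul, smul_eq_mul] at hnonneg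
  exact (mul_neg_of_neg_of_pos hlt hpos).not_ge hnonneg

theorem isEssential_of_isCompact_polytopeOf [Nonempty (Fin d)] (hφ : ∀ i, φ i ≠ 0)
    (hcpt : IsCompact (polytopeOf (linearForm ℝ ∘ φ)))
    (hfull : affineSpan ℝ (polytopeOf (linearForm ℝ ∘ φ)) = ⊤) : IsEssential univ φ := by
  intro v hv
  by_contra hv0
  have hpos := apply_zero_pos_of_mem_arrangementCone hφ hcpt hfull (fun i hi => (hv i hi).ge) hv0
  have hneg := apply_zero_pos_of_mem_arrangementCone hφ hcpt hfull (v := -v)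
    (fun i hi => by rw [map_neg, hv i hi, neg_zero]) (neg_ne_zero.2 hv0)
  rw [Pi.neg_apply] at hneg
  linarith

end Cone

section Order

theorem IsArrangementPoint.exists_lift1_eq_smul (hv : IsArrangementPoint univ φ v) {y : Fin n → ℝ}
    (hy : y ∈ faceOf (linearForm ℝ ∘ φ) v) : ∃ c : ℝ, c * v 0 = 1 ∧ lift1 y = c • v := by
  obtain ⟨c, hc⟩ := Submodule.mem_span_singleton.1
    (hv.2 (lift1 y) fun i _ => (mem_faceOf_linearForm.1 hy).2 i)
  exact ⟨c, congrFun hc 0, hc.symm⟩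

theorem IsArrangementPoint.subsingleton_faceOf (hv : IsArrangementPoint univ φ v) :
    (faceOf (linearForm ℝ ∘ φ) v).Subsingleton := by
  intro y hy z hz
  obtain ⟨a, ha, hay⟩ := hv.exists_lift1_eq_smul hy
  obtain ⟨b, hb, hbz⟩ := hv.exists_lift1_eq_smul hz
  obtain rfl : a = b := mul_right_cancel₀ (right_ne_zero_of_mul_eq_one ha) (ha.trans hb.symm)
  exact Fin.cons_right_injective (α := fun _ => ℝ) 1 (hay.trans hbz.symm)

theorem faceOf_nonempty_of_apply_zero_pos {w : Fin (n + 1) → ℝ} (hw : w ∈ arrangementCone univ φ)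
    (hw0 : 0 < w 0) (hwv : ∀ i, φ i v = 0 → φ i w = 0) :
    (faceOf (linearForm ℝ ∘ φ) v).Nonempty := by
  have hlift : lift1 (Fin.tail ((w 0)⁻¹ • w)) = (w 0)⁻¹ • w := by
    refine funext fun k => Fin.cases ?_ (fun j => ?_) k <;> simp [lift1, Fin.tail, hw0.ne']
  refine ⟨Fin.tail ((w 0)⁻¹ • w), mem_faceOf_linearForm.2 ?_⟩
  rw [hlift]
  refine ⟨fun i hi => ?_, fun i hi => ?_⟩
  · rw [map_smul]
    exact mul_nonneg (inv_nonneg.2 hw0.le) (hw i hi)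
  · rw [map_smul, hwv i hi, smul_zero]

theorem IsArrangementPoint.faceOf_nonempty_iff [Nonempty (Fin d)] (hφ : ∀ i, φ i ≠ 0)
    (hcpt : IsCompact (polytopeOf (linearForm ℝ ∘ φ)))
    (hfull : affineSpan ℝ (polytopeOf (linearForm ℝ ∘ φ)) = ⊤)
    (hv : IsArrangementPoint univ φ v) :
    (faceOf (linearForm ℝ ∘ φ) v).Nonempty ↔
      v ∈ arrangementCone univ φ ∨ -v ∈ arrangementCone univ φ := by
  constructor
  · rintro ⟨y, hy⟩
    obtain ⟨c, hc, hcy⟩ := hv.exists_lift1_eq_smul hy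
    have hcone : ∀ i, 0 ≤ c * φ i v := fun i => by
      simpa [hcy] using (mem_faceOf_linearForm.1 hy).1 i (mem_univ i)
    rcases (left_ne_zero_of_mul_eq_one hc).lt_or_gt with hneg | hpos
    · exact Or.inr fun i _ => by simpa using nonpos_of_mul_nonneg_right (hcone i) hneg
    · exact Or.inl fun i _ => nonneg_of_mul_nonneg_right (hcone i) hpos
  · rintro (hcone | hcone)
    · exact faceOf_nonempty_of_apply_zero_pos hcone
        (apply_zero_pos_of_mem_arrangementCone hφ hcpt hfull hcone hv.1) fun _ hi => hi
    · exact faceOf_nonempty_of_apply_zero_pos hcone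
        (apply_zero_pos_of_mem_arrangementCone hφ hcpt hfull hcone (neg_ne_zero.2 hv.1))
        fun i hi => by rw [map_neg, hi, neg_zero]

theorem IsArrangementPoint.ordOf_eq_adjointOrder (hd : n + 1 ≤ d) (hφ : ∀ i, φ i ≠ 0)
    (hcpt : IsCompact (polytopeOf (linearForm ℝ ∘ φ)))
    (hfull : affineSpan ℝ (polytopeOf (linearForm ℝ ∘ φ)) = ⊤)
    (hv : IsArrangementPoint univ φ v) :
    ordOf (linearForm ℝ ∘ φ) v =
      adjointOrder univ φ (arrangementCone univ φ) (d - n - 1) v := by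
  have : Nonempty (Fin d) := ⟨⟨0, by omega⟩⟩
  have hrk := (rkOf_eq_iff_isArrangementPoint hv.1).2 hv
  have hdirection : Module.finrank ℝ (affineSpan ℝ (faceOf (linearForm ℝ ∘ φ) v)).direction =
      n - rkOf (linearForm ℝ ∘ φ) v := by
    rw [direction_affineSpan, vectorSpan_of_subsingleton ℝ hv.subsingleton_faceOf, finrank_bot, hrk,
      Nat.sub_self]
  have hle := rkOf_le_card_flatOf (linearForm ℝ ∘ φ) v
  have hcount := card_flatOf_add_nonzeroCount φ v
  simp only [ordOf, adjointOrder, nlOf, hdirection, and_true,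
    hv.faceOf_nonempty_iff hφ hcpt hfull, hrk]
  split_ifs <;> omega

end Order

section InterpolationSpace

/-- The polynomials of degree `d - n - 1` that vanish to the orders `ordOf ℓ` on the point residual
of the polytope with facet equations `ℓ`. -/
def interpolationSpace (ℓ : Fin d → MvPolynomial (Fin (n + 1)) ℝ) :
    Submodule ℂ (MvPolynomial (Fin (n + 1)) ℂ) :=
  homogeneousSubmodule (Fin (n + 1)) ℂ (d - n - 1) ⊓
    ⨅ (v) (_ : v ≠ 0) (_ : rkOf ℓ v = n), (pointIdealC v ^ ordOf ℓ v).restrictScalars ℂ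

theorem mem_interpolationSpace {ℓ : Fin d → MvPolynomial (Fin (n + 1)) ℝ}
    {f : MvPolynomial (Fin (n + 1)) ℂ} :
    f ∈ interpolationSpace ℓ ↔ f.IsHomogeneous (d - n - 1) ∧
      ∀ v : Fin (n + 1) → ℝ, v ≠ 0 → rkOf ℓ v = n → f ∈ pointIdealC v ^ ordOf ℓ v := by
  simp [interpolationSpace]

theorem coe_interpolationSpace (ℓ : Fin d → MvPolynomial (Fin (n + 1)) ℝ) :
    (interpolationSpace ℓ : Set (MvPolynomial (Fin (n + 1)) ℂ)) =
      {f | f = 0 ∨ (f.IsHomogeneous (d - n - 1) ∧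
        ∀ v : Fin (n + 1) → ℝ, v ≠ 0 → rkOf ℓ v = n → f ∈ pointIdealC v ^ ordOf ℓ v)} := by
  refine Set.ext fun f => ⟨fun hf => Or.inr (mem_interpolationSpace.1 hf), ?_⟩
  rintro (rfl | hf)
  exacts [zero_mem _, mem_interpolationSpace.2 hf]

theorem pointIdealC_eq_pointIdeal (v : Fin (n + 1) → ℝ) :
    pointIdealC v = pointIdeal (algebraMap ℝ ℂ ∘ v) :=
  rfl

theorem interpolationSpace_le_adjointSpace (hd : n + 1 ≤ d) (hφ : ∀ i, φ i ≠ 0)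
    (hcpt : IsCompact (polytopeOf (linearForm ℝ ∘ φ)))
    (hfull : affineSpan ℝ (polytopeOf (linearForm ℝ ∘ φ)) = ⊤) :
    interpolationSpace (linearForm ℝ ∘ φ) ≤
      adjointSpace ℂ univ φ (arrangementCone univ φ) (d - n - 1) := by
  intro f hf
  obtain ⟨hhom, hvanish⟩ := mem_interpolationSpace.1 hf
  refine mem_adjointSpace.2 ⟨hhom, fun v hv => pointIdeal_pow_le_orderIdeal _ _ ?_⟩
  rw [← hv.ordOf_eq_adjointOrder hd hφ hcpt hfull, ← pointIdealC_eq_pointIdeal]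
  exact hvanish v hv.1 ((rkOf_eq_iff_isArrangementPoint hv.1).2 hv)

theorem adjointPolynomial_mem_interpolationSpace (hd : n + 1 ≤ d) (hφ : ∀ i, φ i ≠ 0)
    (hcpt : IsCompact (polytopeOf (linearForm ℝ ∘ φ)))
    (hfull : affineSpan ℝ (polytopeOf (linearForm ℝ ∘ φ)) = ⊤) {h : Fin d → ℝ}
    (hgen : IsGenericHeight φ h) :
    adjointPolynomial ℂ φ h ∈ interpolationSpace (linearForm ℝ ∘ φ) := by
  have hcard : Fintype.card (Fin d) = (d - n - 1) + Fintype.card (Fin (n + 1)) := by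
    rw [Fintype.card_fin, Fintype.card_fin]
    omega
  refine mem_interpolationSpace.2 ⟨isHomogeneous_adjointPolynomial h hcard, fun v hv hrk => ?_⟩
  rw [((rkOf_eq_iff_isArrangementPoint hv).1 hrk).ordOf_eq_adjointOrder hd hφ hcpt hfull,
    pointIdealC_eq_pointIdeal]
  exact adjointPolynomial_mem_pointIdeal_pow hgen hv hcard

theorem exists_ne_zero_mem_interpolationSpace (hd : n + 1 ≤ d) (hφ : ∀ i, φ i ≠ 0)
    (hcpt : IsCompact (polytopeOf (linearForm ℝ ∘ φ)))
    (hfull : affineSpan ℝ (polytopeOf (linearForm ℝ ∘ φ)) = ⊤) :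
    ∃ f ∈ interpolationSpace (linearForm ℝ ∘ φ), f ≠ 0 := by
  have : Nonempty (Fin d) := ⟨⟨0, by omega⟩⟩
  obtain ⟨x, -, hx⟩ := exists_forall_pos_of_forall_exists_pos (I := univ) (J := univ) (ℓ := φ)
    (fun i _ => by
      obtain ⟨y, hy, hpos⟩ := exists_mem_polytopeOf_pos hfull (hφ i)
      exact ⟨lift1 y, mem_polytopeOf_linearForm.1 hy, hpos⟩) subset_rfl
  obtain ⟨h, hgen⟩ := exists_isGenericHeight φ
  have hpos := fun i => hx i (mem_univ i)
  exact ⟨adjointPolynomial ℂ φ h,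
    adjointPolynomial_mem_interpolationSpace hd hφ hcpt hfull hgen,
    adjointPolynomial_ne_zero hpos
      ((isEssential_of_isCompact_polytopeOf hφ hcpt hfull).exists_isSimplex hpos h)⟩

theorem finrank_interpolationSpace (hd : n + 1 ≤ d) (hφ : ∀ i, φ i ≠ 0)
    (hcpt : IsCompact (polytopeOf (linearForm ℝ ∘ φ)))
    (hfull : affineSpan ℝ (polytopeOf (linearForm ℝ ∘ φ)) = ⊤) :
    Module.finrank ℂ (interpolationSpace (linearForm ℝ ∘ φ)) = 1 := by
  have : Nonempty (Fin d) := ⟨⟨0, by omega⟩⟩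
  obtain ⟨f, hf, hf0⟩ := exists_ne_zero_mem_interpolationSpace hd hφ hcpt hfull
  have : Nontrivial (interpolationSpace (linearForm ℝ ∘ φ)) :=
    ⟨⟨f, hf⟩, 0, fun h => hf0 (congrArg Subtype.val h)⟩
  have hrank : Module.rank ℂ (interpolationSpace (linearForm ℝ ∘ φ)) ≤ 1 :=
    (Submodule.rank_mono (interpolationSpace_le_adjointSpace hd hφ hcpt hfull)).trans
      (rank_adjointSpace_le_one (isEssential_of_isCompact_polytopeOf hφ hcpt hfull)
        (fun i _ => hφ i) (by rw [card_fin]; omega))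
  exact Module.rank_eq_one_iff_finrank_eq_one.1
    (hrank.antisymm (Cardinal.one_le_iff_pos.2 rank_pos))

end InterpolationSpace

end Polytope

theorem adjoint_interpolation_dim_one_general {n d : ℕ}
    (ℓ : Fin d → MvPolynomial (Fin (n + 1)) ℝ) (hd : n + 1 ≤ d)
    (hhom : ∀ i, (ℓ i).IsHomogeneous 1) (hne : ∀ i, ℓ i ≠ 0) (hcpt : IsCompact (polytopeOf ℓ))
    (hfull : affineSpan ℝ (polytopeOf ℓ) = ⊤) :
    ∃ S : Submodule ℂ (MvPolynomial (Fin (n + 1)) ℂ),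
      (S : Set (MvPolynomial (Fin (n + 1)) ℂ)) =
        {f | f = 0 ∨ (f.IsHomogeneous (d - n - 1) ∧
          ∀ v : Fin (n + 1) → ℝ, v ≠ 0 → rkOf ℓ v = n →
            f ∈ pointIdealC v ^ ordOf ℓ v)} ∧
      Module.finrank ℂ S = 1 := by
  choose φ hφ using fun i => exists_linearForm_eq (hhom i)
  obtain rfl : linearForm ℝ ∘ φ = ℓ := funext hφ
  have hφ0 : ∀ i, φ i ≠ 0 := fun i h0 => hne i (by rw [Function.comp_apply, h0, map_zero])
  exact ⟨interpolationSpace (linearForm ℝ ∘ φ), coe_interpolationSpace _,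
    finrank_interpolationSpace hd hφ0 hcpt hfull⟩

/-- The set consisting of the zero polynomial together with all homogeneous
polynomials `f ∈ ℂ[X₀,…,Xₙ]` of degree `d − n − 1` vanishing at every point `v` of the point
residual `R₀(P)` to order at least `ord_P(v)` is a `ℂ`-linear subspace of dimension exactly 1. -/
theorem adjoint_interpolation_dim_one {n d : ℕ}
    (ℓ : Fin d → MvPolynomial (Fin (n + 1)) ℝ) (hP : IsPolytopeSetup ℓ) :
    ∃ S : Submodule ℂ (MvPolynomial (Fin (n + 1)) ℂ),
      (S : Set (MvPolynomial (Fin (n + 1)) ℂ)) =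
        {f | f = 0 ∨ (f.IsHomogeneous (d - n - 1) ∧
          ∀ v : Fin (n + 1) → ℝ, v ≠ 0 → rkOf ℓ v = n →
            f ∈ pointIdealC v ^ ordOf ℓ v)} ∧
      Module.finrank ℂ S = 1 :=
  adjoint_interpolation_dim_one_general ℓ hP.hd hP.hhom hP.hne hP.hcpt hP.hfull

end
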